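/- Let 0 < α, β < 1/2 be constants, K = n, M = ⌈n^α⌉, and r = ⌈n^β⌉, and assume α + 2β ≥ 1 + 2·log log n/log n for all sufficiently large n. Then, under the Uniform popularity distribution, Strategy II with radius r achieves maximum load L = Θ(log log n) with high probability, and its communication cost is C = Θ(r) = Θ(n^β). -/

import Mathlib

open scoped Classical BigOperators
open Filter

/-- Nodes of the `m × m` torus grid (a `√n × √n` grid with wrap-around, `n = m²`). -/
abbrev Node (m : ℕ) := Fin m × Fin m

/-- Wrap-around distance between two coordinates in `Fin m`. -/
def cdist {m : ℕ} (a b : Fin m) : ℕ :=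
  min ((a.val + m - b.val) % m) ((b.val + m - a.val) % m)

/-- Graph (shortest-path) distance on the torus grid. -/
def torusDist {m : ℕ} (u v : Node m) : ℕ := cdist u.1 v.1 + cdist u.2 v.2

/-- A cache placement: each of the `m²` nodes fills `M` cache slots with files from a
library of `K` files.  Under the Uniform popularity distribution the random placement
is uniform over all such functions (each slot i.i.d. uniform on the `K` files). -/
abbrev Placement (m M K : ℕ) := Node m → Fin M → Fin K

/-- Node `u` has cached file `j`. -/
def cached {m M K : ℕ} (ω : Placement m M K) (u : Node m) (j : Fin K) : Prop :=
  ∃ i, ω u i = j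

/-- Probability of an event under the uniform measure on a finite type. -/
noncomputable def unifProb {Ω : Type*} [Fintype Ω] (E : Set Ω) : ℝ :=
  ((Finset.univ.filter (fun ω => ω ∈ E)).card : ℝ) / (Fintype.card Ω : ℝ)

/-- The set of candidate servers for a request at `u` for file `j` with proximity
radius `r`: the nodes within graph distance `r` of `u` that cached file `j`. -/
noncomputable def candSet {m M K : ℕ} (ω : Placement m M K) (u : Node m) (j : Fin K)
    (r : ℕ) : Finset (Node m) :=
  Finset.univ.filter fun v => cached ω v j ∧ torusDist u v ≤ r

/-- The load vector after the first `t` balls (requests) have been processed: ball `s`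
is placed on the lesser loaded of its two candidates `(cand s).1, (cand s).2`, ties
broken by the random bit `tb s`. -/
def loadsUpTo {V : Type*} [DecidableEq V] {n' : ℕ} (cand : Fin n' → V × V)
    (tb : Fin n' → Bool) : ℕ → V → ℕ
  | 0 => fun _ => 0
  | t + 1 => fun v =>
      if h : t < n' then
        let L := loadsUpTo cand tb t
        let c := cand ⟨t, h⟩
        let w := if L c.1 < L c.2 then c.1
          else if L c.2 < L c.1 then c.2
          else if tb ⟨t, h⟩ then c.1 else c.2
        if v = w then L v + 1 else L v
      else loadsUpTo cand tb t v

/-- The node that serves request `t`. -/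
def chosenAt {V : Type*} [DecidableEq V] {n' : ℕ} (cand : Fin n' → V × V)
    (tb : Fin n' → Bool) (t : Fin n') : V :=
  let L := loadsUpTo cand tb t.val
  let c := cand t
  if L c.1 < L c.2 then c.1
  else if L c.2 < L c.1 then c.2
  else if tb t then c.1 else c.2

/-- The maximum load after all `n'` requests. -/
noncomputable def maxLoadII {V : Type*} [DecidableEq V] [Fintype V] {n' : ℕ}
    (cand : Fin n' → V × V) (tb : Fin n' → Bool) : ℕ :=
  Finset.univ.sup (loadsUpTo cand tb n')

/-- Sample space of Strategy II: a placement, the `n'` requests (origin, file), the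
two candidate choices of each request and the tie-breaking bits. -/
abbrev SampleII (m M K n' : ℕ) :=
  Placement m M K × (Fin n' → Node m × Fin K) × (Fin n' → Node m × Node m) ×
    (Fin n' → Bool)

/-- Probability weight of a sample point of Strategy II under the Uniform popularity
distribution: the placement is uniform, each request has a uniform origin and a
uniform file, the two candidates of request `t` are drawn uniformly from the caches of
the requested file within distance `r` of the origin, and the tie-breaking bits are
uniform. -/
noncomputable def weightII (m M K r n' : ℕ) (x : SampleII m M K n') : ℝ :=
  (1 / (Fintype.card (Placement m M K) : ℝ)) *
    (1 / ((Fintype.card (Node m × Fin K) : ℝ)) ^ n') * (1 / 2 ^ n') *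
    ∏ t : Fin n',
      if (x.2.2.1 t).1 ∈ candSet x.1 (x.2.1 t).1 (x.2.1 t).2 r ∧
          (x.2.2.1 t).2 ∈ candSet x.1 (x.2.1 t).1 (x.2.1 t).2 r then
        1 / ((candSet x.1 (x.2.1 t).1 (x.2.1 t).2 r).card : ℝ) ^ 2
      else 0

/-- Probability of an event for Strategy II. -/
noncomputable def probII (m M K r n' : ℕ) (E : Set (SampleII m M K n')) : ℝ :=
  ∑ x ∈ Finset.univ.filter (fun x => x ∈ E), weightII m M K r n' x

/-- Communication cost of Strategy II: the expected average graph distance between a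
request's origin and the node serving it. -/
noncomputable def commCostII (m M K r n' : ℕ) : ℝ :=
  ∑ x : SampleII m M K n',
    weightII m M K r n' x *
      ((∑ t : Fin n', (torusDist (x.2.1 t).1 (chosenAt x.2.2.1 x.2.2.2 t) : ℝ)) /
        (n' : ℝ))

/-- Cache size `M = ⌈n^α⌉`. -/
noncomputable def Mf (α : ℝ) (n : ℕ) : ℕ := ⌈(n : ℝ) ^ α⌉₊

/-- Proximity radius `r = ⌈n^β⌉`. -/
noncomputable def rf (β : ℝ) (n : ℕ) : ℕ := ⌈(n : ℝ) ^ β⌉₊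

/-!
Put `n = m ^ 2` and `δ = α + 2 * β - 1 > 0`.  With high probability the placement is balanced:
every pair (origin, file) has `Θ(n ^ δ)` candidate servers, and each node is a uniformly chosen
candidate of a uniformly random request with probability `Θ(1 / n)`.  Given such a placement the
requests are i.i.d., and both bounds on the maximum load come from layered induction on the
fraction of nodes of load at least `i` inside *every* candidate set.  Since both candidates must
be that loaded for the server to reach load `i + 1`, this fraction is squared, up to constants,
when `i` grows by one, in the upper as well as in the lower bound.  A candidate set has
polynomially many elements, so Chernoff bounds survive the union bound over all candidate sets
as long as the fraction is at least a small negative power of `n`, that is for `Θ(log log n)`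
levels.  Above these levels a single node receives only a bounded number of further requests.
The Chernoff bounds are those of exponential supermartingales, because the loads of different
nodes are dependent.

The cost is at most `r`, the largest possible distance.  It is at least of order `r` because the
ball of radius `r / 48` is a small fraction of the ball of radius `r`, and so are the candidates
in it, on average over the requests.
-/

section SequentialExpectation

variable {X : Type*} [Fintype X]

/-- Expectation of `F` applied to the history reached from `h` after `k` further independent
steps of law `w`.  Histories list the newest step first. -/
noncomputable def seqExp (w : X → ℝ) : ℕ → (List X → ℝ) → List X → ℝ
  | 0, F, h => F h
  | k + 1, F, h => ∑ x, w x * seqExp w k F (x :: h)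

/-- Probability that the history reached from `h` after `k` further independent steps of law `w`
satisfies `P`. -/
noncomputable def seqProb (w : X → ℝ) (k : ℕ) (P : List X → Prop) (h : List X) : ℝ :=
  seqExp w k (fun h => if P h then 1 else 0) h

variable {w : X → ℝ}

lemma seqExp_mono (hw : ∀ x, 0 ≤ w x) {F G : List X → ℝ} (hFG : ∀ h, F h ≤ G h) (k : ℕ)
    (h : List X) : seqExp w k F h ≤ seqExp w k G h := by
  induction k generalizing h with
  | zero => exact hFG h
  | succ k ih => exact Finset.sum_le_sum fun x _ => mul_le_mul_of_nonneg_left (ih _) (hw x)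

lemma seqExp_add (F G : List X → ℝ) (k : ℕ) (h : List X) :
    seqExp w k (fun h => F h + G h) h = seqExp w k F h + seqExp w k G h := by
  induction k generalizing h with
  | zero => rfl
  | succ k ih => simp only [seqExp, ih, mul_add, Finset.sum_add_distrib]

lemma seqExp_sum {ι : Type*} (s : Finset ι) (F : ι → List X → ℝ) (k : ℕ) (h : List X) :
    seqExp w k (fun h => ∑ i ∈ s, F i h) h = ∑ i ∈ s, seqExp w k (F i) h := by
  induction k generalizing h with
  | zero => rfl
  | succ k ih =>
    simp only [seqExp, ih, Finset.mul_sum]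
    exact Finset.sum_comm

lemma seqExp_const (hw : ∑ x, w x = 1) (c : ℝ) (k : ℕ) (h : List X) :
    seqExp w k (fun _ => c) h = c := by
  induction k generalizing h with
  | zero => rfl
  | succ k ih => simp only [seqExp, ih, ← Finset.sum_mul, hw, one_mul]

lemma seqExp_add_steps (a b : ℕ) (F : List X → ℝ) (h : List X) :
    seqExp w (a + b) F h = seqExp w a (seqExp w b F) h := by
  induction a generalizing h with
  | zero => simp only [zero_add, seqExp]
  | succ a ih => simp only [Nat.succ_add, seqExp, ih]

lemma seqExp_eq_sum (F : List X → ℝ) (k : ℕ) (h : List X) :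
    seqExp w k F h = ∑ x : Fin k → X, (∏ t, w (x t)) * F ((List.ofFn x).reverse ++ h) := by
  induction k generalizing h with
  | zero => simp [seqExp]
  | succ k ih =>
    simp only [seqExp, ih]
    rw [← (Fin.consEquiv fun _ : Fin (k + 1) => X).sum_comp, Fintype.sum_prod_type]
    refine Finset.sum_congr rfl fun x _ => ?_
    rw [Finset.mul_sum]
    refine Finset.sum_congr rfl fun y _ => ?_
    simp [Fin.consEquiv, Fin.prod_univ_succ, List.ofFn_succ, mul_assoc]

lemma seqExp_le_pow_mul (hw : ∀ x, 0 ≤ w x) {I : List X → Prop} {F : List X → ℝ} {c : ℝ}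
    (hc : 0 ≤ c) (hI : ∀ h x, I h → I (x :: h))
    (hF : ∀ h, I h → ∑ x, w x * F (x :: h) ≤ c * F h) (k : ℕ) {h : List X} (hh : I h) :
    seqExp w k F h ≤ c ^ k * F h := by
  induction k generalizing h with
  | zero => simp [seqExp]
  | succ k ih =>
    calc ∑ x, w x * seqExp w k F (x :: h)
        ≤ ∑ x, w x * (c ^ k * F (x :: h)) :=
          Finset.sum_le_sum fun x _ => mul_le_mul_of_nonneg_left (ih (hI _ _ hh)) (hw x)
      _ = c ^ k * ∑ x, w x * F (x :: h) := by
          rw [Finset.mul_sum]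
          exact Finset.sum_congr rfl fun x _ => by ring
      _ ≤ c ^ k * (c * F h) := mul_le_mul_of_nonneg_left (hF h hh) (by positivity)
      _ = c ^ (k + 1) * F h := by ring

lemma seqProb_le_seqExp (hw : ∀ x, 0 ≤ w x) {P : List X → Prop} {F : List X → ℝ}
    (hF : ∀ h, 0 ≤ F h) (hPF : ∀ h, P h → 1 ≤ F h) (k : ℕ) (h : List X) :
    seqProb w k P h ≤ seqExp w k F h :=
  seqExp_mono hw (fun h => by split_ifs with hP; exacts [hPF h hP, hF h]) k h

lemma seqProb_mono (hw : ∀ x, 0 ≤ w x) {P Q : List X → Prop} (hPQ : ∀ h, P h → Q h) (k : ℕ)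
    (h : List X) : seqProb w k P h ≤ seqProb w k Q h :=
  seqProb_le_seqExp hw (fun h => by positivity) (fun h hP => by rw [if_pos (hPQ h hP)]) k h

lemma seqProb_or_le (hw : ∀ x, 0 ≤ w x) (P Q : List X → Prop) (k : ℕ) (h : List X) :
    seqProb w k (fun h => P h ∨ Q h) h ≤ seqProb w k P h + seqProb w k Q h := by
  unfold seqProb
  rw [← seqExp_add]
  refine seqExp_mono hw (fun h => ?_) k h
  by_cases hP : P h <;> by_cases hQ : Q h <;> simp [hP, hQ]

lemma seqProb_exists_le_card_mul {ι : Type*} [Fintype ι] (hw : ∀ x, 0 ≤ w x)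
    {P : ι → List X → Prop} {k : ℕ} {h : List X} {ε : ℝ} (hε : ∀ i, seqProb w k (P i) h ≤ ε) :
    seqProb w k (fun h => ∃ i, P i h) h ≤ Fintype.card ι * ε := by
  calc seqProb w k (fun h => ∃ i, P i h) h
      ≤ seqExp w k (fun h => ∑ i, if P i h then 1 else 0) h := by
        refine seqProb_le_seqExp hw (fun h => by positivity) (fun h ⟨i, hi⟩ => ?_) k h
        calc (1 : ℝ) = if P i h then 1 else 0 := (if_pos hi).symm
          _ ≤ _ := Finset.single_le_sum (f := fun i => if P i h then (1 : ℝ) else 0)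
              (fun i _ => by positivity) (Finset.mem_univ i)
    _ = ∑ i, seqProb w k (P i) h := seqExp_sum _ _ _ _
    _ ≤ Fintype.card ι * ε := by
        simpa using Finset.sum_le_card_nsmul Finset.univ _ ε fun i _ => hε i

lemma seqProb_nonneg (hw : ∀ x, 0 ≤ w x) (P : List X → Prop) (k : ℕ) (h : List X) :
    0 ≤ seqProb w k P h := by
  unfold seqProb
  rw [seqExp_eq_sum]
  exact Finset.sum_nonneg fun x _ =>
    mul_nonneg (Finset.prod_nonneg fun _ _ => hw _) (by positivity)

lemma seqProb_le_one (hw : w ∈ stdSimplex ℝ X) (P : List X → Prop) (k : ℕ) (h : List X) :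
    seqProb w k P h ≤ 1 :=
  (seqExp_mono hw.1 (fun h => by split_ifs <;> norm_num) k h).trans_eq (seqExp_const hw.2 1 k h)

lemma seqProb_add_seqProb_not (hw : ∑ x, w x = 1) (P : List X → Prop) (k : ℕ) (h : List X) :
    seqProb w k P h + seqProb w k (fun h => ¬ P h) h = 1 := by
  unfold seqProb
  rw [← seqExp_add]
  refine Eq.trans ?_ (seqExp_const hw 1 k h)
  congr 1
  funext h
  by_cases hP : P h <;> simp [hP]

lemma seqProb_add_steps_le (hw : w ∈ stdSimplex ℝ X) {P Q : List X → Prop} {a b : ℕ} {ε : ℝ}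
    (hε : 0 ≤ ε) (hPQ : ∀ h, P h → seqProb w b (fun h => ¬ Q h) h ≤ ε) (h : List X) :
    seqProb w (a + b) (fun h => ¬ Q h) h ≤ seqProb w a (fun h => ¬ P h) h + ε := by
  calc seqProb w (a + b) (fun h => ¬ Q h) h
      = seqExp w a (seqProb w b fun h => ¬ Q h) h := seqExp_add_steps a b _ h
    _ ≤ seqExp w a (fun h => (if ¬ P h then 1 else 0) + ε) h := by
        refine seqExp_mono hw.1 (fun h => ?_) a h
        by_cases hP : P h
        · simpa only [hP, not_true_eq_false, if_false, zero_add] using hPQ h hP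
        · simpa only [hP, not_false_eq_true, if_true] using
            (seqProb_le_one hw _ b h).trans (le_add_of_nonneg_right hε)
    _ = seqProb w a (fun h => ¬ P h) h + ε := by
        rw [seqExp_add, seqExp_const hw.2, seqProb]
        congr!

lemma seqProb_not_eq_zero {P : List X → Prop} (hP : ∀ h x, P h → P (x :: h)) (k : ℕ)
    {h : List X} (hh : P h) : seqProb w k (fun h => ¬ P h) h = 0 := by
  unfold seqProb
  induction k generalizing h with
  | zero => simp only [seqExp, hh, not_true_eq_false, if_false]
  | succ k ih => simp only [seqExp, ih (hP h _ hh), mul_zero, Finset.sum_const_zero]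

lemma seqProb_le_of_supermartingale (hw : ∀ x, 0 ≤ w x) {I P : List X → Prop} {F : List X → ℝ}
    {b : ℝ} (hF : ∀ h, 0 ≤ F h) (hPF : ∀ h, P h → 1 ≤ F h) (hI : ∀ h x, I h → I (x :: h))
    (hstep : ∀ h, I h → ∑ x, w x * F (x :: h) ≤ Real.exp b * F h) (k : ℕ) {h : List X}
    (hh : I h) : seqProb w k P h ≤ Real.exp (b * k) * F h := by
  calc seqProb w k P h ≤ seqExp w k F h := seqProb_le_seqExp hw hF hPF k h
    _ ≤ Real.exp b ^ k * F h := seqExp_le_pow_mul hw (Real.exp_pos _).le hI hstep k hh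
    _ = Real.exp (b * k) * F h := by rw [← Real.exp_nat_mul, mul_comm b]

lemma sum_mul_le_exp_mul (hw : w ∈ stdSimplex ℝ X) {E : X → Prop} [DecidablePred E]
    {f : X → ℝ} {a b c : ℝ} (hc : 0 ≤ c) (hf : ∀ x, f x ≤ c * (1 + a * if E x then 1 else 0))
    (hb : a * ∑ x, w x * (if E x then 1 else 0) ≤ b) :
    ∑ x, w x * f x ≤ Real.exp b * c := by
  calc ∑ x, w x * f x ≤ ∑ x, w x * (c * (1 + a * if E x then 1 else 0)) :=
        Finset.sum_le_sum fun x _ => mul_le_mul_of_nonneg_left (hf x) (hw.1 x)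
    _ = c * (∑ x, w x + a * ∑ x, w x * (if E x then 1 else 0)) := by
        rw [Finset.mul_sum, ← Finset.sum_add_distrib, Finset.mul_sum]
        exact Finset.sum_congr rfl fun x _ => by ring
    _ ≤ c * Real.exp b := by
        rw [hw.2, add_comm]
        exact mul_le_mul_of_nonneg_left
          ((add_le_add_left hb 1).trans (Real.add_one_le_exp b)) hc
    _ = Real.exp b * c := mul_comm _ _

-- Chernoff's method: `exp (θ (Z - κ))`, killed once `G` fails, is a supermartingale up to a
-- constant factor per step.
lemma seqProb_and_le_counter_le (hw : w ∈ stdSimplex ℝ X) {G : List X → Prop} {Z : List X → ℕ}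
    {p θ κ : ℝ} (hθ : 0 ≤ θ) (hG : ∀ h x, G (x :: h) → G h) (hZ : ∀ h x, Z (x :: h) ≤ Z h + 1)
    (hp : ∀ h, G h → ∑ x, w x * (if Z h < Z (x :: h) then 1 else 0) ≤ p) (k : ℕ)
    {h : List X} (hh : Z h = 0) :
    seqProb w k (fun h => G h ∧ κ ≤ Z h) h ≤
      Real.exp ((Real.exp θ - 1) * p * k - θ * κ) := by
  set F : List X → ℝ := fun h => if G h then Real.exp (θ * (Z h - κ)) else 0 with hF
  have he : 0 ≤ Real.exp θ - 1 := sub_nonneg.mpr (Real.one_le_exp hθ)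
  have hstep : ∀ h, True → ∑ x, w x * F (x :: h) ≤ Real.exp ((Real.exp θ - 1) * p) * F h := by
    intro h _
    by_cases hg : G h
    swap
    · have hF0 : ∀ x, F (x :: h) = 0 := fun x => if_neg fun hx => hg (hG h x hx)
      simp only [hF0, mul_zero, Finset.sum_const_zero]
      positivity
    simp only [hF, if_pos hg]
    refine sum_mul_le_exp_mul hw (E := fun x => Z h < Z (x :: h)) (a := Real.exp θ - 1)
      (Real.exp_pos _).le (fun x => ?_) (mul_le_mul_of_nonneg_left (hp h hg) he)
    refine (ite_le_sup _ _ _).trans (sup_le ?_ (by positivity))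
    split_ifs with hx
    · rw [le_antisymm (hZ h x) hx, mul_one, add_sub_cancel, ← Real.exp_add]
      push_cast
      exact (congrArg Real.exp (by ring)).le
    · rw [mul_zero, add_zero, mul_one]
      have hx' : (Z (x :: h) : ℝ) ≤ Z h := mod_cast not_lt.mp hx
      gcongr
  have hF0 : F h ≤ Real.exp (-(θ * κ)) := by
    refine (ite_le_sup _ _ _).trans (sup_le (le_of_eq ?_) (Real.exp_pos _).le)
    rw [hh, Nat.cast_zero, zero_sub, mul_neg]
  calc seqProb w k (fun h => G h ∧ κ ≤ Z h) h
      ≤ Real.exp ((Real.exp θ - 1) * p * k) * F h := by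
        refine seqProb_le_of_supermartingale hw.1 (fun h => by positivity)
          (fun h ⟨hg, hκ⟩ => ?_) (fun _ _ _ => trivial) hstep k trivial
        simp only [hF, if_pos hg]
        exact Real.one_le_exp (mul_nonneg hθ (sub_nonneg.mpr hκ))
    _ ≤ Real.exp ((Real.exp θ - 1) * p * k) * Real.exp (-(θ * κ)) := by gcongr
    _ = Real.exp ((Real.exp θ - 1) * p * k - θ * κ) := by rw [← Real.exp_add, ← sub_eq_add_neg]

lemma ite_exp_mul_sub_le {θ κ : ℝ} (hθ : 0 ≤ θ) {a b : ℕ} (hab : a ≤ b) :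
    (if (b : ℝ) < κ then Real.exp (θ * (κ - b)) else 0) ≤
      Real.exp (θ * (κ - a)) * (1 + -(1 - Real.exp (-θ)) * (if a < b then 1 else 0)) := by
  refine (ite_le_sup _ _ _).trans (sup_le ?_ ?_) <;> split_ifs with hlt
  · have hsucc : (a : ℝ) + 1 ≤ b := mod_cast hlt
    rw [mul_one, neg_sub, add_sub_cancel, ← Real.exp_add]
    exact Real.exp_le_exp.mpr (by nlinarith)
  · rw [mul_zero, add_zero, mul_one]
    gcongr
  · rw [mul_one, neg_sub, add_sub_cancel]
    positivity
  · rw [mul_zero, add_zero, mul_one]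
    positivity

lemma seqProb_counter_lt_le (hw : w ∈ stdSimplex ℝ X) {I : List X → Prop} {Z : List X → ℕ}
    {p θ κ : ℝ} (hθ : 0 ≤ θ) (hI : ∀ h x, I h → I (x :: h)) (hZ : ∀ h x, Z h ≤ Z (x :: h))
    (hp : ∀ h, I h → (Z h : ℝ) < κ → p ≤ ∑ x, w x * (if Z h < Z (x :: h) then 1 else 0))
    (k : ℕ) {h : List X} (hh : I h) :
    seqProb w k (fun h => (Z h : ℝ) < κ) h ≤
      Real.exp (θ * κ - (1 - Real.exp (-θ)) * p * k) := by
  set F : List X → ℝ := fun h => if (Z h : ℝ) < κ then Real.exp (θ * (κ - Z h)) else 0 with hF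
  have he : 0 ≤ 1 - Real.exp (-θ) := sub_nonneg.mpr (Real.exp_le_one_iff.mpr (by linarith))
  have hstep : ∀ h, I h → ∑ x, w x * F (x :: h) ≤
      Real.exp (-((1 - Real.exp (-θ)) * p)) * F h := by
    intro h hi
    by_cases hκ : (Z h : ℝ) < κ
    swap
    · have hF0 : ∀ x, F (x :: h) = 0 := fun x =>
        if_neg fun hx => hκ ((Nat.cast_le.mpr (hZ h x)).trans_lt hx)
      simp only [hF0, mul_zero, Finset.sum_const_zero]
      positivity
    simp only [hF, if_pos hκ]
    refine sum_mul_le_exp_mul hw (E := fun x => Z h < Z (x :: h)) (a := -(1 - Real.exp (-θ)))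
      (Real.exp_pos _).le (fun x => ite_exp_mul_sub_le hθ (hZ h x)) ?_
    rw [neg_mul]
    exact neg_le_neg (mul_le_mul_of_nonneg_left (hp h hi hκ) he)
  have hF0 : F h ≤ Real.exp (θ * κ) := by
    refine (ite_le_sup _ _ _).trans (sup_le ?_ (Real.exp_pos _).le)
    exact Real.exp_le_exp.mpr (mul_le_mul_of_nonneg_left (sub_le_self _ (Nat.cast_nonneg _)) hθ)
  calc seqProb w k (fun h => (Z h : ℝ) < κ) h
      ≤ Real.exp (-((1 - Real.exp (-θ)) * p) * k) * F h := by
        refine seqProb_le_of_supermartingale hw.1 (fun h => by positivity) (fun h hκ => ?_) hI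
          hstep k hh
        simp only [hF, if_pos hκ]
        exact Real.one_le_exp (mul_nonneg hθ (sub_nonneg.mpr hκ.le))
    _ ≤ Real.exp (-((1 - Real.exp (-θ)) * p) * k) * Real.exp (θ * κ) := by gcongr
    _ = Real.exp (θ * κ - (1 - Real.exp (-θ)) * p * k) := by
        rw [← Real.exp_add]
        congr 1
        ring

end SequentialExpectation

section UniformWeight

variable {ι : Type*}

/-- Point masses of the uniform distribution on a finite set `A`. -/
noncomputable def unifWeight (A : Finset ι) (i : ι) : ℝ := if i ∈ A then 1 / (A.card : ℝ) else 0

lemma unifWeight_nonneg (A : Finset ι) (i : ι) : 0 ≤ unifWeight A i := by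
  unfold unifWeight
  positivity

lemma sum_unifWeight_mul [Fintype ι] (A : Finset ι) (f : ι → ℝ) :
    ∑ i, unifWeight A i * f i = 𝔼 i ∈ A, f i := by
  simp only [unifWeight, ite_mul, zero_mul, Finset.sum_ite_mem, Finset.univ_inter,
    Finset.expect_eq_sum_div_card, one_div_mul_eq_div, Finset.sum_div]

lemma expect_ite_eq_card_filter_div (A : Finset ι) (p : ι → Prop) [DecidablePred p] :
    𝔼 i ∈ A, (if p i then (1 : ℝ) else 0) = (A.filter p).card / A.card := by
  rw [Finset.expect_eq_sum_div_card, Finset.sum_boole]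

end UniformWeight

section TwoChoice

variable {V R : Type*}

/-- The randomness of one request: its type (origin and file, in the application), its two
candidate servers, and the tie-breaking bit. -/
abbrev Step (R V : Type*) := R × (V × V) × Bool

/-- The server chosen in step `x` when the current loads are `L`. -/
def pick (L : V → ℕ) (x : Step R V) : V :=
  if L x.2.1.1 < L x.2.1.2 then x.2.1.1
  else if L x.2.1.2 < L x.2.1.1 then x.2.1.2
  else if x.2.2 then x.2.1.1 else x.2.1.2

lemma pick_eq_or (L : V → ℕ) (x : Step R V) : pick L x = x.2.1.1 ∨ pick L x = x.2.1.2 := by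
  unfold pick
  split_ifs <;> simp

lemma apply_pick_le (L : V → ℕ) (x : Step R V) :
    L (pick L x) ≤ L x.2.1.1 ∧ L (pick L x) ≤ L x.2.1.2 := by
  unfold pick
  split_ifs <;> omega

variable [Fintype R]

/-- The law of one step: a uniform request type `ρ`, two independent uniform candidates from
`S ρ`, and a fair tie-breaking bit. -/
noncomputable def stepWeight (S : R → Finset V) (x : Step R V) : ℝ :=
  unifWeight Finset.univ x.1 * (unifWeight (S x.1) x.2.1.1 * unifWeight (S x.1) x.2.1.2) *
    unifWeight Finset.univ x.2.2

/-- The probability that the first candidate of a request is `v`. -/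
noncomputable def hitProb (S : R → Finset V) (v : V) : ℝ := 𝔼 ρ, unifWeight (S ρ) v

lemma stepWeight_nonneg (S : R → Finset V) (x : Step R V) : 0 ≤ stepWeight S x :=
  mul_nonneg (mul_nonneg (unifWeight_nonneg _ _)
    (mul_nonneg (unifWeight_nonneg _ _) (unifWeight_nonneg _ _))) (unifWeight_nonneg _ _)

lemma sum_hitProb [DecidableEq V] (S : R → Finset V) (A : Finset V) :
    ∑ v ∈ A, hitProb S v = 𝔼 ρ, 𝔼 v ∈ S ρ, if v ∈ A then (1 : ℝ) else 0 := by
  simp only [hitProb, ← Finset.expect_sum_comm, unifWeight, Finset.sum_ite_mem,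
    Finset.expect_eq_sum_div_card (S _), Finset.inter_comm (S _) A, Finset.sum_div]
  congr!

variable [Fintype V]

lemma sum_stepWeight_mul (S : R → Finset V) (f g : R → V → ℝ) (φ : Bool → ℝ) :
    ∑ x, stepWeight S x * (f x.1 x.2.1.1 * g x.1 x.2.1.2 * φ x.2.2) =
      𝔼 ρ, (𝔼 v ∈ S ρ, f ρ v) * (𝔼 v ∈ S ρ, g ρ v) * 𝔼 b, φ b := by
  have hprod : ∀ ρ, (𝔼 v ∈ S ρ, f ρ v) * (𝔼 v ∈ S ρ, g ρ v) * 𝔼 b, φ b =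
      ∑ y : (V × V) × Bool, unifWeight (S ρ) y.1.1 * f ρ y.1.1 *
        (unifWeight (S ρ) y.1.2 * g ρ y.1.2) * (unifWeight Finset.univ y.2 * φ y.2) := by
    intro ρ
    rw [← sum_unifWeight_mul, ← sum_unifWeight_mul, ← sum_unifWeight_mul, Fintype.sum_mul_sum,
      ← Fintype.sum_prod_type', Fintype.sum_mul_sum, ← Fintype.sum_prod_type']
  rw [Fintype.sum_prod_type, ← sum_unifWeight_mul]
  refine Finset.sum_congr rfl fun ρ _ => ?_
  rw [hprod, Finset.mul_sum]
  refine Finset.sum_congr rfl fun y _ => ?_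
  simp only [stepWeight]
  ring

lemma stepWeight_mem_stdSimplex [Nonempty R] {S : R → Finset V} (hS : ∀ ρ, (S ρ).Nonempty) :
    stepWeight S ∈ stdSimplex ℝ (Step R V) := by
  refine ⟨stepWeight_nonneg S, ?_⟩
  have hsum := sum_stepWeight_mul S (fun _ _ => 1) (fun _ _ => 1) fun _ => 1
  simpa only [mul_one, Finset.expect_const (hS _), Finset.expect_const Finset.univ_nonempty]
    using hsum

end TwoChoice

section Loads

variable {V R : Type*} [DecidableEq V]

/-- The loads after a history of steps, newest step first. -/
def load : List (Step R V) → V → ℕ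
  | [] => fun _ => 0
  | x :: h => fun v => if v = pick (load h) x then load h v + 1 else load h v

lemma load_cons (x : Step R V) (h : List (Step R V)) (v : V) :
    load (x :: h) v = load h v + if v = pick (load h) x then 1 else 0 := by
  simp only [load]
  split_ifs <;> rfl

lemma load_le_load_cons (x : Step R V) (h : List (Step R V)) (v : V) :
    load h v ≤ load (x :: h) v := by
  rw [load_cons]
  exact Nat.le_add_right _ _

/-- The nodes of `A` whose load after the history `h` is at least `i`. -/
def heavy (A : Finset V) (i : ℕ) (h : List (Step R V)) : Finset V :=
  A.filter fun v => i ≤ load h v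

lemma heavy_subset_heavy_cons (A : Finset V) (i : ℕ) (x : Step R V) (h : List (Step R V)) :
    heavy A i h ⊆ heavy A i (x :: h) :=
  Finset.monotone_filter_right _ fun v _ hv => hv.trans (load_le_load_cons x h v)

/-- The part of the loads in `A` that exceeds level `i`. -/
def excess (A : Finset V) (i : ℕ) (h : List (Step R V)) : ℕ := ∑ v ∈ A, (load h v - i)

lemma excess_cons (A : Finset V) (i : ℕ) (x : Step R V) (h : List (Step R V)) :
    excess A i (x :: h) = excess A i h + if pick (load h) x ∈ heavy A i h then 1 else 0 := by
  have hcons : ∀ v, load (x :: h) v - i = (load h v - i) +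
      if v = pick (load h) x then (if i ≤ load h v then 1 else 0) else 0 := by
    intro v
    rw [load_cons]
    split_ifs <;> omega
  simp only [excess, hcons, Finset.sum_add_distrib, Finset.sum_ite_eq', heavy, Finset.mem_filter,
    ite_and]

lemma mul_card_heavy_le_excess (A : Finset V) (i c : ℕ) (h : List (Step R V)) :
    c * (heavy A (i + c) h).card ≤ excess A i h := by
  calc c * (heavy A (i + c) h).card = ∑ _v ∈ heavy A (i + c) h, c := by
        rw [Finset.sum_const, smul_eq_mul, mul_comm]
    _ ≤ ∑ v ∈ heavy A (i + c) h, (load h v - i) :=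
        Finset.sum_le_sum fun v hv => Nat.le_sub_of_add_le' (Finset.mem_filter.mp hv).2
    _ ≤ excess A i h := Finset.sum_le_sum_of_subset (Finset.filter_subset _ _)

/-- In each candidate set, at most a fraction `β` of the nodes has load at least `i`. -/
def HeavyLE (S : R → Finset V) (i : ℕ) (β : ℝ) (h : List (Step R V)) : Prop :=
  ∀ ρ, ((heavy (S ρ) i h).card : ℝ) ≤ β * (S ρ).card

/-- In each candidate set, at least a fraction `γ` of the nodes has load at least `i`. -/
def HeavyGE (S : R → Finset V) (i : ℕ) (γ : ℝ) (h : List (Step R V)) : Prop :=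
  ∀ ρ, γ * (S ρ).card ≤ (heavy (S ρ) i h).card

lemma HeavyLE.of_cons {S : R → Finset V} {i : ℕ} {β : ℝ} {h : List (Step R V)} {x : Step R V}
    (H : HeavyLE S i β (x :: h)) : HeavyLE S i β h := fun ρ =>
  (Nat.cast_le.mpr (Finset.card_le_card (heavy_subset_heavy_cons _ _ _ _))).trans (H ρ)

lemma HeavyGE.cons {S : R → Finset V} {i : ℕ} {γ : ℝ} {h : List (Step R V)}
    (H : HeavyGE S i γ h) (x : Step R V) : HeavyGE S i γ (x :: h) := fun ρ =>
  (H ρ).trans (Nat.cast_le.mpr (Finset.card_le_card (heavy_subset_heavy_cons _ _ _ _)))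

lemma heavyLE_zero_one (S : R → Finset V) (h : List (Step R V)) : HeavyLE S 0 1 h := fun ρ => by
  simp [heavy]

lemma heavyGE_zero_one (S : R → Finset V) (h : List (Step R V)) : HeavyGE S 0 1 h := fun ρ => by
  simp [heavy]

end Loads

section LayeredInduction

/-- The doubly exponentially decreasing solution of `a (j + 1) = a j ^ 2 / A` with
`a 0 = A * q`. -/
noncomputable def squaringSeq (A q : ℝ) (j : ℕ) : ℝ := A * q ^ 2 ^ j

lemma squaringSeq_succ {A : ℝ} (hA : A ≠ 0) (q : ℝ) (j : ℕ) :
    squaringSeq A q (j + 1) = squaringSeq A q j ^ 2 / A := by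
  unfold squaringSeq
  rw [pow_succ 2, pow_mul]
  field_simp

lemma squaringSeq_nonneg {A q : ℝ} (hA : 0 ≤ A) (hq : 0 ≤ q) (j : ℕ) : 0 ≤ squaringSeq A q j :=
  mul_nonneg hA (pow_nonneg hq _)

lemma squaringSeq_succ_le_half {A q : ℝ} (hA : 0 ≤ A) (hq : 0 ≤ q) (hq' : q ≤ 1 / 2) (j : ℕ) :
    squaringSeq A q (j + 1) ≤ squaringSeq A q j / 2 := by
  have hpow : q ^ 2 ^ j ≤ 1 / 2 :=
    (pow_le_of_le_one hq (hq'.trans (by norm_num)) (by positivity)).trans hq'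
  calc squaringSeq A q (j + 1) = squaringSeq A q j * q ^ 2 ^ j := by
        unfold squaringSeq
        ring
    _ ≤ squaringSeq A q j * (1 / 2) :=
        mul_le_mul_of_nonneg_left hpow (squaringSeq_nonneg hA hq j)
    _ = squaringSeq A q j / 2 := by ring

lemma squaringSeq_antitone {A q : ℝ} (hA : 0 ≤ A) (hq : 0 ≤ q) (hq' : q ≤ 1 / 2) :
    Antitone (squaringSeq A q) :=
  antitone_nat_of_succ_le fun j =>
    (squaringSeq_succ_le_half hA hq hq' j).trans (half_le_self (squaringSeq_nonneg hA hq j))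

variable {V R : Type*} [DecidableEq V] [Fintype V] [Fintype R] {S : R → Finset V} {n : ℕ}

-- Placing a ball on a node of load at least `i` requires both candidates to have load at
-- least `i`; this is where the square in the recursion comes from.
lemma sum_stepWeight_pick_mem_heavy_le {i : ℕ} {β : ℝ} (hβ : 0 ≤ β) {h : List (Step R V)}
    (H : HeavyLE S i β h) (A : Finset V) :
    ∑ x, stepWeight S x * (if pick (load h) x ∈ heavy A i h then 1 else 0) ≤
      2 * β * ∑ v ∈ heavy A i h, hitProb S v := by
  let f : R → V → ℝ := fun _ v => if v ∈ heavy A i h then 1 else 0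
  let g : R → V → ℝ := fun _ v => if i ≤ load h v then 1 else 0
  have hg : ∀ ρ, 𝔼 v ∈ S ρ, g ρ v ≤ β := fun ρ => by
    rw [expect_ite_eq_card_filter_div]
    exact div_le_of_le_mul₀ (Nat.cast_nonneg _) hβ (H ρ)
  have hfg : ∀ x : Step R V, (if pick (load h) x ∈ heavy A i h then (1 : ℝ) else 0) ≤
      f x.1 x.2.1.1 * g x.1 x.2.1.2 * 1 + g x.1 x.2.1.1 * f x.1 x.2.1.2 * 1 := by
    intro x
    split_ifs with hx
    swap
    · positivity
    obtain ⟨h₁, h₂⟩ := apply_pick_le (load h) x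
    have hi : i ≤ load h (pick (load h) x) := (Finset.mem_filter.mp hx).2
    simp only [f, g, if_pos (hi.trans h₁), if_pos (hi.trans h₂), mul_one, one_mul]
    rcases pick_eq_or (load h) x with hp | hp <;> rw [hp] at hx <;> rw [if_pos hx]
    exacts [le_add_of_nonneg_right (by positivity), le_add_of_nonneg_left (by positivity)]
  have hf : 𝔼 ρ, 𝔼 v ∈ S ρ, f ρ v = ∑ v ∈ heavy A i h, hitProb S v := (sum_hitProb S _).symm
  calc ∑ x, stepWeight S x * (if pick (load h) x ∈ heavy A i h then 1 else 0)
      ≤ ∑ x, stepWeight S x *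
          (f x.1 x.2.1.1 * g x.1 x.2.1.2 * 1 + g x.1 x.2.1.1 * f x.1 x.2.1.2 * 1) :=
        Finset.sum_le_sum fun x _ =>
          mul_le_mul_of_nonneg_left (hfg x) (stepWeight_nonneg S x)
    _ = 2 * 𝔼 ρ, (𝔼 v ∈ S ρ, f ρ v) * (𝔼 v ∈ S ρ, g ρ v) := by
        simp only [mul_add, Finset.sum_add_distrib]
        rw [sum_stepWeight_mul S f g fun _ => 1, sum_stepWeight_mul S g f fun _ => 1, two_mul]
        simp [mul_comm]
    _ ≤ 2 * 𝔼 ρ, (𝔼 v ∈ S ρ, f ρ v) * β := by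
        gcongr with ρ
        exact hg ρ
    _ = 2 * β * ∑ v ∈ heavy A i h, hitProb S v := by
        rw [← Finset.expect_mul, hf]
        ring

lemma seqProb_heavyLE_and_le_excess_le [Nonempty R] (hS : ∀ ρ, (S ρ).Nonempty) {C : ℝ}
    (hC : 0 ≤ C) (hhit : ∀ v, hitProb S v ≤ C / n) (A : Finset V) (i : ℕ) {β σ θ : ℝ}
    (hβ : 0 ≤ β) (hθ : 0 ≤ θ) (hσ0 : 0 ≤ σ) (κ : ℝ)
    (hσ : ∀ h : List (Step R V), HeavyLE S i β h → ((heavy A i h).card : ℝ) ≤ σ) :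
    seqProb (stepWeight S) n (fun h => HeavyLE S i β h ∧ κ ≤ excess A i h) [] ≤
      Real.exp ((Real.exp θ - 1) * (2 * C * β * σ) - θ * κ) := by
  have hstep : ∀ h : List (Step R V), HeavyLE S i β h →
      ∑ x, stepWeight S x * (if excess A i h < excess A i (x :: h) then 1 else 0) ≤
        2 * C * β * σ / n := by
    intro h H
    calc ∑ x, stepWeight S x * (if excess A i h < excess A i (x :: h) then (1 : ℝ) else 0)
        = ∑ x, stepWeight S x * (if pick (load h) x ∈ heavy A i h then 1 else 0) := by
          refine Finset.sum_congr rfl fun x _ => ?_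
          rw [excess_cons]
          by_cases hx : pick (load h) x ∈ heavy A i h <;> simp [hx]
      _ ≤ 2 * β * ∑ v ∈ heavy A i h, hitProb S v := sum_stepWeight_pick_mem_heavy_le hβ H A
      _ ≤ 2 * β * ((heavy A i h).card * (C / n)) := by
          gcongr
          simpa only [nsmul_eq_mul] using Finset.sum_le_card_nsmul _ _ _ fun v _ => hhit v
      _ ≤ 2 * β * (σ * (C / n)) := by
          gcongr
          exact hσ h H
      _ = 2 * C * β * σ / n := by ring
  refine (seqProb_and_le_counter_le (stepWeight_mem_stdSimplex hS) hθ
    (fun h x => HeavyLE.of_cons) (fun h x => ?_) hstep n ?_).trans (Real.exp_le_exp.mpr ?_)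
  · rw [excess_cons]
    split_ifs <;> simp
  · simp [excess, load]
  · have he : 0 ≤ Real.exp θ - 1 := sub_nonneg.mpr (Real.one_le_exp hθ)
    rw [mul_assoc, div_mul_eq_mul_div, mul_div_assoc]
    exact sub_le_sub_right (mul_le_mul_of_nonneg_left
      (mul_le_of_le_one_right (by positivity) (div_self_le_one _)) he) _

lemma seqProb_not_heavyLE_add_le [Nonempty R] (hS : ∀ ρ, (S ρ).Nonempty) {C : ℝ} (hC : 0 ≤ C)
    (hhit : ∀ v, hitProb S v ≤ C / n) {s : ℝ} (hs : ∀ ρ, s ≤ (S ρ).card) (i c : ℕ)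
    {β β' δ : ℝ} (hβ : 0 ≤ β) (hδ : 0 ≤ δ) (hβ' : 4 * C * β ^ 2 + δ ≤ c * β') :
    seqProb (stepWeight S) n (fun h => ¬ HeavyLE S (i + c) β' h) [] ≤
      seqProb (stepWeight S) n (fun h => ¬ HeavyLE S i β h) [] +
        Fintype.card R * Real.exp (-(δ * s)) := by
  have hexcess : ∀ ρ, seqProb (stepWeight S) n
      (fun h => HeavyLE S i β h ∧ c * (β' * (S ρ).card) ≤ excess (S ρ) i h) [] ≤
        Real.exp (-(δ * s)) := by
    intro ρ
    refine (seqProb_heavyLE_and_le_excess_le hS hC hhit (S ρ) i hβ zero_le_one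
      (by positivity) _ fun h H => H ρ).trans (Real.exp_le_exp.mpr ?_)
    have he : Real.exp 1 - 1 ≤ 2 := by linarith [Real.exp_one_lt_three]
    calc (Real.exp 1 - 1) * (2 * C * β * (β * (S ρ).card)) - 1 * (c * (β' * (S ρ).card))
        ≤ 2 * (2 * C * β * (β * (S ρ).card)) - 1 * (c * (β' * (S ρ).card)) := by gcongr
      _ = (4 * C * β ^ 2 - c * β') * (S ρ).card := by ring
      _ ≤ -δ * (S ρ).card := by
          gcongr
          linarith
      _ ≤ -(δ * s) := by
          rw [neg_mul]
          exact neg_le_neg (mul_le_mul_of_nonneg_left (hs ρ) hδ)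
  refine (seqProb_mono (stepWeight_nonneg S) (fun h hh => ?_) n []).trans <|
    (seqProb_or_le (stepWeight_nonneg S) _ _ n []).trans <|
      add_le_add_right (seqProb_exists_le_card_mul (stepWeight_nonneg S) hexcess) _
  refine or_iff_not_imp_left.mpr fun H => ?_
  obtain ⟨ρ, hρ⟩ := not_forall.mp hh
  refine ⟨ρ, not_not.mp H, ?_⟩
  calc c * (β' * (S ρ).card) ≤ c * ((heavy (S ρ) (i + c) h).card : ℝ) :=
        mul_le_mul_of_nonneg_left (not_le.mp hρ).le (Nat.cast_nonneg _)
    _ ≤ excess (S ρ) i h := mod_cast mul_card_heavy_le_excess (S ρ) i c h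

lemma seqProb_not_heavyLE_inv_le [Nonempty R] (hS : ∀ ρ, (S ρ).Nonempty) {C : ℝ} (hC : 1 ≤ C)
    (hhit : ∀ v, hitProb S v ≤ C / n) {s : ℝ} (hs : ∀ ρ, s ≤ (S ρ).card) {i₀ : ℕ}
    (hi₀ : 80 * C ^ 2 ≤ i₀) :
    seqProb (stepWeight S) n (fun h => ¬ HeavyLE S i₀ (1 / (16 * C)) h) [] ≤
      Fintype.card R * Real.exp (-((1 / (16 * C)) ^ 2 * s)) := by
  have hβ : 1 / (16 * C) ≤ 1 := div_le_one_of_le₀ (by linarith) (by positivity)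
  have hβ0 : 0 ≤ 1 / (16 * C) := by positivity
  have hstart : 4 * C * 1 ^ 2 + (1 / (16 * C)) ^ 2 ≤ i₀ * (1 / (16 * C)) := by
    calc 4 * C * 1 ^ 2 + (1 / (16 * C)) ^ 2 ≤ 5 * C := by nlinarith
      _ = 80 * C ^ 2 * (1 / (16 * C)) := by
        field_simp
        norm_num
      _ ≤ i₀ * (1 / (16 * C)) := mul_le_mul_of_nonneg_right hi₀ hβ0
  have hle := seqProb_not_heavyLE_add_le hS (zero_le_one.trans hC) hhit hs 0 i₀ zero_le_one
    (sq_nonneg _) hstart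
  rwa [seqProb_not_eq_zero (fun h x _ => heavyLE_zero_one S (x :: h)) n (heavyLE_zero_one S []),
    zero_add, zero_add] at hle

lemma seqProb_not_heavyLE_le [Nonempty R] (hS : ∀ ρ, (S ρ).Nonempty) {C : ℝ} (hC : 1 ≤ C)
    (hhit : ∀ v, hitProb S v ≤ C / n) {s : ℝ} (hs0 : 0 ≤ s) (hs : ∀ ρ, s ≤ (S ρ).card) {i₀ : ℕ}
    (hi₀ : 80 * C ^ 2 ≤ i₀) (j : ℕ) :
    seqProb (stepWeight S) n
        (fun h => ¬ HeavyLE S (i₀ + j) (squaringSeq (1 / (8 * C)) (1 / 2) j) h) [] ≤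
      (j + 1) * (Fintype.card R * Real.exp (-(squaringSeq (1 / (8 * C)) (1 / 2) j ^ 2 * s))) := by
  set β := squaringSeq (1 / (8 * C)) (1 / 2) with hβ
  have hA : 0 ≤ 1 / (8 * C) := by positivity
  have hβ0 : ∀ j, 0 ≤ β j := squaringSeq_nonneg hA (by norm_num)
  induction j with
  | zero =>
    have hβ00 : β 0 = 1 / (16 * C) := by
      rw [hβ, squaringSeq, pow_zero, pow_one]
      ring
    rw [hβ00]
    simpa using seqProb_not_heavyLE_inv_le hS hC hhit hs hi₀
  | succ j ih =>
    have hsucc : β (j + 1) = 8 * C * β j ^ 2 := by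
      rw [hβ, squaringSeq_succ (by positivity), div_div_eq_mul_div]
      ring
    have hanti : β (j + 1) ≤ β j := squaringSeq_antitone hA (by norm_num) (by norm_num) j.le_succ
    have hexp : Real.exp (-(β j ^ 2 * s)) ≤ Real.exp (-(β (j + 1) ^ 2 * s)) := by
      gcongr
      exact hβ0 _
    calc _ ≤ _ := seqProb_not_heavyLE_add_le hS (zero_le_one.trans hC) hhit hs (i₀ + j) 1 (hβ0 j)
          (sq_nonneg (β j)) (by rw [hsucc, Nat.cast_one]; nlinarith [sq_nonneg (β j)])
      _ ≤ (j + 1) * (Fintype.card R * Real.exp (-(β (j + 1) ^ 2 * s))) +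
            Fintype.card R * Real.exp (-(β (j + 1) ^ 2 * s)) := by
          gcongr
          refine ih.trans ?_
          gcongr
      _ = _ := by
          push_cast
          ring

theorem seqProb_exists_load_ge_le [Nonempty R] (hS : ∀ ρ, (S ρ).Nonempty) {C : ℝ} (hC : 1 ≤ C)
    (hhit : ∀ v, hitProb S v ≤ C / n) {s : ℝ} (hs0 : 0 ≤ s) (hs : ∀ ρ, s ≤ (S ρ).card) {i₀ : ℕ}
    (hi₀ : 80 * C ^ 2 ≤ i₀) (j k : ℕ) {θ : ℝ} (hθ : 0 ≤ θ) :
    seqProb (stepWeight S) n (fun h => ∃ v, i₀ + j + k ≤ load h v) [] ≤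
      (j + 1) * (Fintype.card R * Real.exp (-(squaringSeq (1 / (8 * C)) (1 / 2) j ^ 2 * s))) +
        Fintype.card V *
          Real.exp (Real.exp θ * (2 * C * squaringSeq (1 / (8 * C)) (1 / 2) j) - θ * k) := by
  set β := squaringSeq (1 / (8 * C)) (1 / 2) j
  have hβ0 : 0 ≤ β := squaringSeq_nonneg (by positivity) (by norm_num) j
  have hnode : ∀ v, seqProb (stepWeight S) n
      (fun h => HeavyLE S (i₀ + j) β h ∧ k ≤ (excess {v} (i₀ + j) h : ℝ)) [] ≤
        Real.exp (Real.exp θ * (2 * C * β) - θ * k) := by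
    intro v
    refine (seqProb_heavyLE_and_le_excess_le hS (zero_le_one.trans hC) hhit {v} (i₀ + j) hβ0 hθ
      zero_le_one k fun h _ => ?_).trans (Real.exp_le_exp.mpr ?_)
    · exact mod_cast (Finset.card_filter_le _ _).trans (Finset.card_singleton v).le
    · rw [mul_one]
      gcongr
      exact sub_le_self _ zero_le_one
  refine (seqProb_mono (stepWeight_nonneg S) (fun h ⟨v, hv⟩ => ?_) n []).trans <|
    (seqProb_or_le (stepWeight_nonneg S) _ _ n []).trans <|
      add_le_add (seqProb_not_heavyLE_le hS hC hhit hs0 hs hi₀ j)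
        (seqProb_exists_le_card_mul (stepWeight_nonneg S) hnode)
  refine or_iff_not_imp_left.mpr fun H => ⟨v, not_not.mp H, ?_⟩
  rw [excess, Finset.sum_singleton]
  exact mod_cast Nat.le_sub_of_add_le' hv

omit [Fintype V] [Fintype R] in
lemma card_heavy_lt_card_heavy_cons {A : Finset V} {i : ℕ} {h : List (Step R V)} {x : Step R V}
    (h₁ : x.2.1.1 ∈ heavy A i h \ heavy A (i + 1) h) (h₂ : i ≤ load h x.2.1.2)
    (hb : x.2.2 = true) :
    (heavy A (i + 1) h).card < (heavy A (i + 1) (x :: h)).card := by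
  obtain ⟨hi, hi'⟩ := Finset.mem_sdiff.mp h₁
  obtain ⟨hA, hi⟩ := Finset.mem_filter.mp hi
  have hle : load h x.2.1.1 ≤ load h x.2.1.2 :=
    (not_lt.mp fun hlt => hi' (Finset.mem_filter.mpr ⟨hA, hlt⟩)).trans h₂
  have hpick : pick (load h) x = x.2.1.1 := by
    rw [pick, if_neg (not_lt.mpr hle), if_pos hb, ite_self]
  refine Finset.card_lt_card <|
    (Finset.ssubset_iff_of_subset (heavy_subset_heavy_cons A _ x h)).mpr
      ⟨x.2.1.1, Finset.mem_filter.mpr ⟨hA, ?_⟩, hi'⟩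
  rw [load_cons, if_pos hpick.symm]
  exact Nat.add_le_add_right hi 1

lemma mul_sum_hitProb_le_sum_stepWeight (hS : ∀ ρ, (S ρ).Nonempty) {i : ℕ} {γ : ℝ}
    {h : List (Step R V)} (H : HeavyGE S i γ h) (A : Finset V) :
    γ / 2 * ∑ v ∈ heavy A i h \ heavy A (i + 1) h, hitProb S v ≤
      ∑ x, stepWeight S x *
        (if (heavy A (i + 1) h).card < (heavy A (i + 1) (x :: h)).card then 1 else 0) := by
  let f : R → V → ℝ := fun _ v => if v ∈ heavy A i h \ heavy A (i + 1) h then 1 else 0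
  let g : R → V → ℝ := fun _ v => if i ≤ load h v then 1 else 0
  let φ : Bool → ℝ := fun b => if b then 1 else 0
  have hg : ∀ ρ, γ ≤ 𝔼 v ∈ S ρ, g ρ v := fun ρ => by
    rw [expect_ite_eq_card_filter_div]
    exact (le_div_iff₀ (mod_cast (hS ρ).card_pos)).mpr (H ρ)
  have hφ : 𝔼 b, φ b = 1 / 2 := by
    simp [φ]
  have hf : 𝔼 ρ, 𝔼 v ∈ S ρ, f ρ v = ∑ v ∈ heavy A i h \ heavy A (i + 1) h, hitProb S v :=
    (sum_hitProb S _).symm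
  have hfg : ∀ x : Step R V, f x.1 x.2.1.1 * g x.1 x.2.1.2 * φ x.2.2 ≤
      if (heavy A (i + 1) h).card < (heavy A (i + 1) (x :: h)).card then 1 else 0 := by
    intro x
    by_cases hx : x.2.1.1 ∈ heavy A i h \ heavy A (i + 1) h ∧ i ≤ load h x.2.1.2 ∧ x.2.2 = true
    · obtain ⟨h₁, h₂, hb⟩ := hx
      simp only [f, g, φ, if_pos h₁, if_pos h₂, if_pos hb, mul_one,
        if_pos (card_heavy_lt_card_heavy_cons h₁ h₂ hb), le_refl]
    · have hzero : f x.1 x.2.1.1 * g x.1 x.2.1.2 * φ x.2.2 = 0 := by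
        simp only [f, g, φ, mul_ite, mul_one, mul_zero, ← ite_and]
        exact if_neg fun hx' => hx ⟨hx'.2.2, hx'.2.1, hx'.1⟩
      rw [hzero]
      positivity
  calc γ / 2 * ∑ v ∈ heavy A i h \ heavy A (i + 1) h, hitProb S v
      = 𝔼 ρ, (𝔼 v ∈ S ρ, f ρ v) * γ * 𝔼 b, φ b := by
        rw [← Finset.expect_mul, ← Finset.expect_mul, hf, hφ]
        ring
    _ ≤ 𝔼 ρ, (𝔼 v ∈ S ρ, f ρ v) * (𝔼 v ∈ S ρ, g ρ v) * 𝔼 b, φ b := by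
        gcongr with ρ
        exact hg ρ
    _ = ∑ x, stepWeight S x * (f x.1 x.2.1.1 * g x.1 x.2.1.2 * φ x.2.2) :=
        (sum_stepWeight_mul S f g φ).symm
    _ ≤ _ := Finset.sum_le_sum fun x _ => mul_le_mul_of_nonneg_left (hfg x) (stepWeight_nonneg S x)

lemma le_sum_stepWeight_of_card_heavy_lt (hS : ∀ ρ, (S ρ).Nonempty) {c : ℝ} (hc : 0 ≤ c)
    (hhit : ∀ v, c / n ≤ hitProb S v) {i : ℕ} {γ γ' : ℝ} (hγ : 0 ≤ γ) (hγγ' : γ' ≤ γ / 2)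
    {h : List (Step R V)} (H : HeavyGE S i γ h) {ρ : R}
    (hlt : ((heavy (S ρ) (i + 1) h).card : ℝ) < γ' * (S ρ).card) :
    γ ^ 2 * (S ρ).card * c / (4 * n) ≤ ∑ x, stepWeight S x *
      (if (heavy (S ρ) (i + 1) h).card < (heavy (S ρ) (i + 1) (x :: h)).card then 1 else 0) := by
  set B := heavy (S ρ) i h \ heavy (S ρ) (i + 1) h
  have hB : γ / 2 * (S ρ).card ≤ B.card := by
    have hsdiff : ((heavy (S ρ) i h).card : ℝ) ≤ B.card + (heavy (S ρ) (i + 1) h).card := by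
      exact mod_cast Finset.card_le_card_sdiff_add_card
    have hγ'S : γ' * (S ρ).card ≤ γ / 2 * (S ρ).card := by gcongr
    linarith [H ρ]
  calc γ ^ 2 * (S ρ).card * c / (4 * n) = γ / 2 * (γ / 2 * (S ρ).card * (c / n)) := by
        rw [mul_comm 4 (n : ℝ), ← div_div]
        ring
    _ ≤ γ / 2 * (B.card * (c / n)) := by gcongr
    _ ≤ γ / 2 * ∑ v ∈ B, hitProb S v := by
        gcongr
        simpa only [nsmul_eq_mul] using Finset.card_nsmul_le_sum B _ _ fun v _ => hhit v
    _ ≤ _ := mul_sum_hitProb_le_sum_stepWeight hS H (S ρ)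

lemma seqProb_not_heavyGE_succ_le [Nonempty R] (hS : ∀ ρ, (S ρ).Nonempty) (hn : 0 < n) {c : ℝ}
    (hc : 0 ≤ c) (hhit : ∀ v, c / n ≤ hitProb S v) {s : ℝ} (hs : ∀ ρ, s ≤ (S ρ).card) {i : ℕ}
    {γ γ' : ℝ} (hγ : 0 ≤ γ) (hγ' : 0 ≤ γ') (hγγ' : γ' ≤ γ / 2) {T : ℕ}
    (hT : 16 * n * γ' ≤ c * γ ^ 2 * T) {h : List (Step R V)} (H : HeavyGE S i γ h) :
    seqProb (stepWeight S) T (fun h => ¬ HeavyGE S (i + 1) γ' h) h ≤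
      Fintype.card R * Real.exp (-(γ' * s)) := by
  have hheavy : ∀ ρ, seqProb (stepWeight S) T
      (fun h => ((heavy (S ρ) (i + 1) h).card : ℝ) < γ' * (S ρ).card) h ≤
        Real.exp (-(γ' * s)) := by
    intro ρ
    refine (seqProb_counter_lt_le (I := HeavyGE S i γ) (stepWeight_mem_stdSimplex hS) zero_le_one
      (fun h x H => H.cons x)
      (fun h x => Finset.card_le_card (heavy_subset_heavy_cons (S ρ) (i + 1) x h))
      (fun h H hlt => le_sum_stepWeight_of_card_heavy_lt hS hc hhit hγ hγγ' H hlt)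
      T H).trans (Real.exp_le_exp.mpr ?_)
    have he : 1 / 2 ≤ 1 - Real.exp (-1) := by linarith [Real.exp_neg_one_lt_half]
    have hmean : 4 * (γ' * (S ρ).card) ≤ γ ^ 2 * (S ρ).card * c / (4 * n) * T := by
      rw [div_mul_eq_mul_div, le_div_iff₀ (by positivity)]
      nlinarith [mul_le_mul_of_nonneg_right hT (Nat.cast_nonneg (α := ℝ) (S ρ).card)]
    have hγ's : γ' * s ≤ γ' * (S ρ).card := mul_le_mul_of_nonneg_left (hs ρ) hγ'
    nlinarith [mul_nonneg hγ' (Nat.cast_nonneg (α := ℝ) (S ρ).card)]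
  refine (seqProb_mono (stepWeight_nonneg S) (fun h hh => ?_) T h).trans
    (seqProb_exists_le_card_mul (stepWeight_nonneg S) hheavy)
  obtain ⟨ρ, hρ⟩ := not_forall.mp hh
  exact ⟨ρ, not_le.mp hρ⟩

lemma seqProb_not_heavyGE_le [Nonempty R] (hS : ∀ ρ, (S ρ).Nonempty) (hn : 0 < n) {c : ℝ}
    (hc : 0 < c) (hc1 : c ≤ 1) (hhit : ∀ v, c / n ≤ hitProb S v) {s : ℝ} (hs0 : 0 ≤ s)
    (hs : ∀ ρ, s ≤ (S ρ).card) {L T : ℕ} (hL : 0 < L) (hT : n ≤ 2 * L * T) {i : ℕ} (hi : i ≤ L) :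
    seqProb (stepWeight S) (i * T)
        (fun h => ¬ HeavyGE S i (squaringSeq (32 * L / c) (c / (32 * L)) i) h) [] ≤
      i * (Fintype.card R * Real.exp (-(squaringSeq (32 * L / c) (c / (32 * L)) L * s))) := by
  set γ := squaringSeq (32 * L / c) (c / (32 * L)) with hγ
  have hL1 : (1 : ℝ) ≤ L := mod_cast hL
  have hA : 0 ≤ 32 * L / c := by positivity
  have hq : 0 ≤ c / (32 * L) := by positivity
  have hq' : c / (32 * L) ≤ 1 / 2 := by
    rw [div_le_div_iff₀ (by positivity) two_pos]
    linarith
  have hγ0 : ∀ j, 0 ≤ γ j := squaringSeq_nonneg hA hq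
  induction i with
  | zero =>
    have hγ00 : γ 0 = 1 := by
      rw [hγ, squaringSeq, pow_zero, pow_one]
      field_simp
    rw [hγ00, seqProb_not_eq_zero (fun h x _ => heavyGE_zero_one S (x :: h)) _
      (heavyGE_zero_one S [])]
    simp
  | succ i ih =>
    have hsucc : γ (i + 1) = γ i ^ 2 * c / (32 * L) := by
      rw [hγ, squaringSeq_succ (by positivity), div_div_eq_mul_div]
    have hstep : 16 * n * γ (i + 1) ≤ c * γ i ^ 2 * T := by
      calc 16 * n * γ (i + 1) ≤ 16 * ((2 * L * T : ℕ) : ℝ) * γ (i + 1) := by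
            gcongr
            exact hγ0 _
        _ = c * γ i ^ 2 * T := by
            rw [hsucc]
            push_cast
            field_simp
            ring
    have hlast : γ L ≤ γ (i + 1) := squaringSeq_antitone hA hq hq' hi
    have hε : ∀ h : List (Step R V), HeavyGE S i (γ i) h →
        seqProb (stepWeight S) T (fun h => ¬ HeavyGE S (i + 1) (γ (i + 1)) h) h ≤
          Fintype.card R * Real.exp (-(γ L * s)) := fun h H =>
      (seqProb_not_heavyGE_succ_le hS hn hc.le hhit hs (hγ0 i) (hγ0 (i + 1))
        (squaringSeq_succ_le_half hA hq hq' i) hstep H).trans (by gcongr)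
    rw [Nat.succ_mul, Nat.cast_succ, add_one_mul (i : ℝ)]
    exact (seqProb_add_steps_le (stepWeight_mem_stdSimplex hS) (by positivity) hε []).trans
      (add_le_add_left (ih (Nat.le_of_succ_le hi)) _)

theorem seqProb_forall_load_lt_le [Nonempty R] (hS : ∀ ρ, (S ρ).Nonempty) {c : ℝ}
    (hc : 0 < c) (hc1 : c ≤ 1) (hhit : ∀ v, c / n ≤ hitProb S v) {s : ℝ} (hs0 : 0 ≤ s)
    (hs : ∀ ρ, s ≤ (S ρ).card) {L : ℕ} (hL : 0 < L) (hLn : L ≤ n) :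
    seqProb (stepWeight S) n (fun h => ∀ v, load h v < L) [] ≤
      L * (Fintype.card R * Real.exp (-(squaringSeq (32 * L / c) (c / (32 * L)) L * s))) := by
  set γ := squaringSeq (32 * L / c) (c / (32 * L)) L
  have hw := stepWeight_mem_stdSimplex hS
  have hT : n ≤ 2 * L * (n / L) := by
    have h1 : 1 ≤ n / L := (Nat.one_le_div_iff hL).mpr hLn
    nlinarith [Nat.div_add_mod n L, Nat.mod_lt n hL]
  have hγ : 0 < γ := mul_pos (by positivity) (by positivity)
  have hlight : ∀ h : List (Step R V), (∀ v, load h v < L) → ¬ HeavyGE S L γ h := by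
    intro h hh H
    obtain ⟨ρ⟩ := ‹Nonempty R›
    have hempty : heavy (S ρ) L h = ∅ :=
      Finset.filter_eq_empty_iff.mpr fun v _ => not_le.mpr (hh v)
    have hρ := H ρ
    rw [hempty, Finset.card_empty, Nat.cast_zero] at hρ
    exact hρ.not_gt (mul_pos hγ (mod_cast (hS ρ).card_pos))
  obtain ⟨k, hk⟩ := Nat.exists_eq_add_of_le (Nat.mul_div_le n L)
  calc seqProb (stepWeight S) n (fun h => ∀ v, load h v < L) []
      ≤ seqProb (stepWeight S) (L * (n / L) + k) (fun h => ¬ HeavyGE S L γ h) [] := by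
        rw [← hk]
        exact seqProb_mono hw.1 hlight n []
    _ ≤ seqProb (stepWeight S) (L * (n / L)) (fun h => ¬ HeavyGE S L γ h) [] + 0 :=
        seqProb_add_steps_le hw le_rfl
          (fun h H => (seqProb_not_eq_zero (fun h x (H : HeavyGE S L γ h) => H.cons x) k H).le) []
    _ ≤ _ := by
        rw [add_zero]
        exact seqProb_not_heavyGE_le hS (hL.trans_le hLn) hc hc1 hhit hs0 hs hL hT le_rfl

end LayeredInduction

section MeanCost

variable {V R : Type*}

lemma expect_one_le_one {ι : Type*} (A : Finset ι) : 𝔼 _i ∈ A, (1 : ℝ) ≤ 1 := by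
  rw [Finset.expect_eq_sum_div_card, Finset.sum_const, nsmul_one]
  exact div_self_le_one _

lemma mem_of_stepWeight_ne_zero [Fintype R] {S : R → Finset V} {x : Step R V}
    (hx : stepWeight S x ≠ 0) : x.2.1.1 ∈ S x.1 ∧ x.2.1.2 ∈ S x.1 := by
  simp only [stepWeight, unifWeight, ne_eq, mul_eq_zero, not_or] at hx
  exact ⟨by_contra fun h => hx.1.2.1 (if_neg h), by_contra fun h => hx.1.2.2 (if_neg h)⟩

lemma sum_stepWeight_le_one [Fintype R] [Fintype V] (S : R → Finset V) :
    ∑ x, stepWeight S x ≤ 1 := by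
  have hsum := sum_stepWeight_mul S (fun _ _ => 1) (fun _ _ => 1) fun _ => 1
  simp only [mul_one, Finset.expect_const Finset.univ_nonempty] at hsum
  rw [hsum]
  calc 𝔼 ρ, (𝔼 _v ∈ S ρ, (1 : ℝ)) * 𝔼 _v ∈ S ρ, (1 : ℝ)
      ≤ 𝔼 _ρ : R, (1 : ℝ) := Finset.expect_le_expect fun ρ _ =>
        mul_le_one₀ (expect_one_le_one _) (by positivity) (expect_one_le_one _)
    _ ≤ 1 := expect_one_le_one _

lemma sum_prod_mul_apply {X : Type*} [Fintype X] {w : X → ℝ} (hw : ∑ x, w x = 1) {n : ℕ}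
    (g : X → ℝ) (t : Fin n) :
    ∑ y : Fin n → X, (∏ s, w (y s)) * g (y t) = ∑ x, w x * g x := by
  have hprod : ∀ y : Fin n → X, (∏ s, w (y s)) * g (y t) =
      ∏ s, w (y s) * if s = t then g (y s) else 1 := fun y => by
    simp only [Finset.prod_mul_distrib, Finset.prod_ite_eq', Finset.mem_univ, if_true]
  simp only [hprod]
  rw [← Fintype.prod_sum fun s x => w x * if s = t then g x else 1,
    Fintype.prod_eq_single t fun s hs => by simp only [hs, if_false, mul_one, hw]]
  simp only [if_true]

/-- The server of request `t` in the run given by the steps `y`. -/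
def server [DecidableEq V] {n : ℕ} (y : Fin n → Step R V) (t : Fin n) : V :=
  chosenAt (fun s => (y s).2.1) (fun s => (y s).2.2) t

lemma server_eq_or [DecidableEq V] {n : ℕ} (y : Fin n → Step R V) (t : Fin n) :
    server y t = (y t).2.1.1 ∨ server y t = (y t).2.1.2 :=
  pick_eq_or (loadsUpTo (fun s => (y s).2.1) (fun s => (y s).2.2) t) (y t)

variable [Fintype V] [Fintype R] [DecidableEq V]

/-- The expected average of `c (request type) (server)` over `n` requests with candidate
sets `S`. -/
noncomputable def meanCost (S : R → Finset V) (c : R → V → ℝ) (n : ℕ) : ℝ :=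
  ∑ y : Fin n → Step R V, (∏ t, stepWeight S (y t)) * 𝔼 t, c (y t).1 (server y t)

lemma meanCost_nonneg {S : R → Finset V} {c : R → V → ℝ} (hc : ∀ ρ v, 0 ≤ c ρ v) (n : ℕ) :
    0 ≤ meanCost S c n :=
  Finset.sum_nonneg fun _ _ => mul_nonneg (Finset.prod_nonneg fun _ _ => stepWeight_nonneg S _)
    (Finset.expect_nonneg fun _ _ => hc _ _)

lemma meanCost_le {S : R → Finset V} {c : R → V → ℝ} {b : ℝ} (hb : 0 ≤ b)
    (hc : ∀ ρ, ∀ v ∈ S ρ, c ρ v ≤ b) (n : ℕ) : meanCost S c n ≤ b := by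
  have hrun : ∀ y : Fin n → Step R V, ∏ t, stepWeight S (y t) ≠ 0 →
      𝔼 t, c (y t).1 (server y t) ≤ b := by
    intro y hy
    calc 𝔼 t, c (y t).1 (server y t) ≤ 𝔼 _t : Fin n, 1 * b := by
          refine Finset.expect_le_expect fun t ht => ?_
          obtain ⟨h₁, h₂⟩ := mem_of_stepWeight_ne_zero (Finset.prod_ne_zero_iff.mp hy t ht)
          rw [one_mul]
          rcases server_eq_or y t with h | h
          · exact hc _ _ (h ▸ h₁)
          · exact hc _ _ (h ▸ h₂)
      _ = (𝔼 _t : Fin n, 1) * b := (Finset.expect_mul _ _ _).symm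
      _ ≤ b := mul_le_of_le_one_left hb (expect_one_le_one _)
  calc meanCost S c n ≤ ∑ y : Fin n → Step R V, (∏ t, stepWeight S (y t)) * b := by
        refine Finset.sum_le_sum fun y _ => ?_
        by_cases hy : ∏ t, stepWeight S (y t) = 0
        · simp only [hy, zero_mul, le_refl]
        · exact mul_le_mul_of_nonneg_left (hrun y hy)
            (Finset.prod_nonneg fun t _ => stepWeight_nonneg S _)
    _ = (∑ x, stepWeight S x) ^ n * b := by rw [← Finset.sum_mul, Fintype.sum_pow]
    _ ≤ b := mul_le_of_le_one_left hb
        (pow_le_one₀ (Finset.sum_nonneg fun x _ => stepWeight_nonneg S x)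
          (sum_stepWeight_le_one S))

lemma le_meanCost [Nonempty R] {S : R → Finset V} (hS : ∀ ρ, (S ρ).Nonempty)
    {c : R → V → ℝ} (hc : ∀ ρ v, 0 ≤ c ρ v) {d : ℝ} (hd : 0 ≤ d)
    (hnear : 𝔼 ρ, 𝔼 v ∈ S ρ, (if c ρ v ≤ d then (1 : ℝ) else 0) ≤ 1 / 4) {n : ℕ} (hn : n ≠ 0) :
    d / 2 ≤ meanCost S c n := by
  have : NeZero n := ⟨hn⟩
  have hw := stepWeight_mem_stdSimplex hS
  let near : R → V → ℝ := fun ρ v => if c ρ v ≤ d then 1 else 0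
  let far : Step R V → ℝ := fun x => d * (1 - near x.1 x.2.1.1 - near x.1 x.2.1.2)
  have hfar : d / 2 ≤ ∑ x, stepWeight S x * far x := by
    have hsum₁ := sum_stepWeight_mul S near (fun _ _ => 1) fun _ => 1
    have hsum₂ := sum_stepWeight_mul S (fun _ _ => 1) near fun _ => 1
    simp only [mul_one, one_mul, Finset.expect_const (hS _),
      Finset.expect_const Finset.univ_nonempty] at hsum₁ hsum₂
    have hsplit : ∑ x, stepWeight S x * far x = d * (∑ x, stepWeight S x -
        ∑ x, stepWeight S x * near x.1 x.2.1.1 - ∑ x, stepWeight S x * near x.1 x.2.1.2) := by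
      rw [← Finset.sum_sub_distrib, ← Finset.sum_sub_distrib, Finset.mul_sum]
      exact Finset.sum_congr rfl fun x _ => by simp only [far]; ring
    rw [hsplit, hw.2, hsum₁, hsum₂]
    nlinarith
  have hpoint : ∀ (y : Fin n → Step R V) t, far (y t) ≤ c (y t).1 (server y t) := by
    intro y t
    have hle : ∀ v, d * (1 - near (y t).1 v) ≤ c (y t).1 v := by
      intro v
      simp only [near]
      split_ifs with h
      · simpa using hc _ v
      · simpa using (not_le.mp h).le
    have hnonneg : ∀ v, 0 ≤ d * near (y t).1 v := fun v =>
      mul_nonneg hd (by simp only [near]; positivity)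
    rcases server_eq_or y t with h | h <;> rw [h]
    · linarith [hle (y t).2.1.1, hnonneg (y t).2.1.2]
    · linarith [hle (y t).2.1.2, hnonneg (y t).2.1.1]
  calc d / 2 ≤ 𝔼 _t : Fin n, ∑ x, stepWeight S x * far x := by
        rwa [Finset.expect_const Finset.univ_nonempty]
    _ = ∑ y : Fin n → Step R V, (∏ s, stepWeight S (y s)) * 𝔼 t, far (y t) := by
        simp only [Finset.mul_expect, ← Finset.expect_sum_comm, sum_prod_mul_apply hw.2 far]
    _ ≤ meanCost S c n := Finset.sum_le_sum fun y _ => mul_le_mul_of_nonneg_left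
        (Finset.expect_le_expect fun t _ => hpoint y t)
        (Finset.prod_nonneg fun t _ => stepWeight_nonneg S _)

end MeanCost

section ConditioningOnPlacement

/-- The sequences of request types, candidate pairs and tie-breaking bits, combined into one
sequence of steps. -/
def stepSeqEquiv (n : ℕ) (R V : Type*) :
    ((Fin n → R) × (Fin n → V × V) × (Fin n → Bool)) ≃ (Fin n → Step R V) where
  toFun x t := (x.1 t, x.2.1 t, x.2.2 t)
  invFun y := (fun t => (y t).1, fun t => (y t).2.1, fun t => (y t).2.2)
  left_inv _ := rfl
  right_inv _ := rfl

lemma loadsUpTo_eq_load {V R : Type*} [DecidableEq V] {n : ℕ} (y : Fin n → Step R V) {t : ℕ}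
    (ht : t ≤ n) : loadsUpTo (fun s => (y s).2.1) (fun s => (y s).2.2) t =
      load ((List.ofFn y).take t).reverse := by
  induction t with
  | zero => rfl
  | succ t ih =>
    have hlt : t < n := ht
    funext v
    simp only [List.take_add_one, List.getElem?_ofFn, hlt, dif_pos, Option.toList_some,
      List.reverse_append, List.reverse_singleton, List.singleton_append, load, loadsUpTo,
      ih hlt.le]
    rfl

lemma maxLoadII_eq_sup_load {V R : Type*} [Fintype V] [DecidableEq V] {n : ℕ}
    (y : Fin n → Step R V) : maxLoadII (fun s => (y s).2.1) (fun s => (y s).2.2) =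
      Finset.univ.sup (load (List.ofFn y).reverse) := by
  rw [maxLoadII, loadsUpTo_eq_load y le_rfl, List.take_of_length_le (List.length_ofFn).le]

variable {m M K : ℕ}

/-- The candidate servers of each request, for radius `r` and placement `ω`. -/
noncomputable def candidates (r : ℕ) (ω : Placement m M K) (ρ : Node m × Fin K) :
    Finset (Node m) :=
  candSet ω ρ.1 ρ.2 r

lemma weightII_eq (r n : ℕ) (x : SampleII m M K n) :
    weightII m M K r n x = 1 / (Fintype.card (Placement m M K) : ℝ) *
      ∏ t, stepWeight (candidates r x.1) (stepSeqEquiv n _ _ x.2 t) := by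
  have hpair : ∀ (A : Finset (Node m)) (v v' : Node m), unifWeight A v * unifWeight A v' =
      if v ∈ A ∧ v' ∈ A then 1 / (A.card : ℝ) ^ 2 else 0 := by
    intro A v v'
    by_cases hv : v ∈ A <;> by_cases hv' : v' ∈ A <;> simp [unifWeight, hv, hv', sq]
  have huniv : ∀ {ι : Type} [Fintype ι] (i : ι),
      unifWeight Finset.univ i = 1 / (Fintype.card ι : ℝ) := by
    intro ι _ i
    rw [unifWeight, if_pos (Finset.mem_univ i), Finset.card_univ]
  simp only [weightII, stepWeight, hpair, huniv, Fintype.card_bool, Finset.prod_mul_distrib,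
    Finset.prod_const, Finset.card_univ, Fintype.card_fin, one_div_pow, Nat.cast_two]
  rw [mul_assoc, mul_assoc, mul_comm (1 / 2 ^ n : ℝ), ← mul_assoc (1 / _ ^ n)]
  rfl

lemma sum_weightII_mul (r n : ℕ)
    (F : Placement m M K → (Fin n → Step (Node m × Fin K) (Node m)) → ℝ) :
    ∑ x : SampleII m M K n, weightII m M K r n x * F x.1 (stepSeqEquiv n _ _ x.2) =
      𝔼 ω, ∑ y, (∏ t, stepWeight (candidates r ω) (y t)) * F ω y := by
  rw [Fintype.expect_eq_sum_div_card, Fintype.sum_prod_type, Finset.sum_div]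
  refine Finset.sum_congr rfl fun ω _ => ?_
  rw [← (stepSeqEquiv n _ _).sum_comp, Finset.sum_div]
  refine Finset.sum_congr rfl fun x _ => ?_
  rw [weightII_eq]
  ring

lemma probII_maxLoadII_eq_expect (r n : ℕ) (P : ℕ → Prop) :
    probII m M K r n {x | P (maxLoadII x.2.2.1 x.2.2.2)} =
      𝔼 ω : Placement m M K, seqProb (stepWeight (candidates r ω)) n
        (fun h => P (Finset.univ.sup (load h))) [] := by
  simp only [seqProb, seqExp_eq_sum, List.append_nil, ← maxLoadII_eq_sup_load]
  rw [← sum_weightII_mul, probII, Finset.sum_filter]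
  refine Finset.sum_congr rfl fun x _ => ?_
  simp only [Set.mem_ofPred_eq, mul_ite, mul_one, mul_zero]
  rfl

lemma commCostII_eq_expect (r n : ℕ) :
    commCostII m M K r n = 𝔼 ω : Placement m M K,
      meanCost (candidates r ω) (fun ρ v => (torusDist ρ.1 v : ℝ)) n := by
  simp only [meanCost]
  rw [← sum_weightII_mul]
  simp only [Fintype.expect_eq_sum_div_card, Fintype.card_fin]
  rfl

lemma commCostII_le_radius (r n : ℕ) : commCostII m M K r n ≤ r := by
  rw [commCostII_eq_expect]
  calc 𝔼 ω : Placement m M K, meanCost (candidates r ω) (fun ρ v => (torusDist ρ.1 v : ℝ)) n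
      ≤ 𝔼 _ω : Placement m M K, 1 * (r : ℝ) := by
        refine Finset.expect_le_expect fun ω _ => ?_
        rw [one_mul]
        exact meanCost_le (Nat.cast_nonneg r)
          (fun ρ v hv => Nat.cast_le.mpr (Finset.mem_filter.mp hv).2.2) n
    _ = (𝔼 _ω : Placement m M K, 1) * (r : ℝ) := (Finset.expect_mul _ _ _).symm
    _ ≤ r := mul_le_of_le_one_left (Nat.cast_nonneg r) (expect_one_le_one _)

end ConditioningOnPlacement

section TorusBalls

variable {m : ℕ}

/-- The distance of `a` from `0` on the cycle `Fin m`. -/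
def cyclicNorm (a : Fin m) : ℕ := min a.val (-a).val

lemma cdist_eq_cyclicNorm_sub [NeZero m] (a b : Fin m) : cdist a b = cyclicNorm (a - b) := by
  unfold cdist cyclicNorm
  rw [neg_sub, Fin.val_sub, Fin.val_sub]
  congr 2 <;> omega

lemma torusDist_comm (u v : Node m) : torusDist u v = torusDist v u := by
  simp only [torusDist, cdist, min_comm]

/-- The number of nodes in a ball of radius `r` in the torus. -/
noncomputable def ballCard (m r : ℕ) : ℕ :=
  (Finset.univ.filter fun w : Node m => cyclicNorm w.1 + cyclicNorm w.2 ≤ r).card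

lemma card_filter_torusDist_le [NeZero m] (u : Node m) (r : ℕ) :
    (Finset.univ.filter fun v => torusDist u v ≤ r).card = ballCard m r := by
  refine Finset.card_nbij' (fun v => u - v) (fun w => u - w) ?_ ?_ ?_ ?_ <;>
    simp [Set.MapsTo, Set.LeftInvOn, torusDist, cdist_eq_cyclicNorm_sub]

lemma ballCard_pos (m r : ℕ) [NeZero m] : 0 < ballCard m r :=
  Finset.card_pos.mpr ⟨0, Finset.mem_filter.mpr ⟨Finset.mem_univ _, by simp [cyclicNorm]⟩⟩

lemma sq_div_four_le_ballCard {r : ℕ} (hr : r < m) : (r : ℝ) ^ 2 / 4 ≤ ballCard m r := by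
  have hbox : (r / 2 + 1) * (r / 2 + 1) ≤ ballCard m r := by
    have hside : (Finset.univ.filter fun a : Fin m => a.val < r / 2 + 1).card = r / 2 + 1 := by
      rw [Fin.card_filter_val_lt]
      omega
    rw [← hside, ← Finset.card_product]
    refine Finset.card_le_card fun w hw => ?_
    simp only [Finset.mem_product, Finset.mem_filter, Finset.mem_univ, true_and] at hw ⊢
    have h₁ : cyclicNorm w.1 ≤ w.1.val := min_le_left _ _
    have h₂ : cyclicNorm w.2 ≤ w.2.val := min_le_left _ _
    omega
  have hr2 : (r : ℝ) ≤ 2 * ((r / 2 + 1 : ℕ) : ℝ) := by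
    exact_mod_cast (by omega : r ≤ 2 * (r / 2 + 1))
  calc (r : ℝ) ^ 2 / 4 ≤ (2 * ((r / 2 + 1 : ℕ) : ℝ)) ^ 2 / 4 := by gcongr
    _ = (((r / 2 + 1) * (r / 2 + 1) : ℕ) : ℝ) := by push_cast; ring
    _ ≤ (ballCard m r : ℝ) := Nat.cast_le.mpr hbox

lemma card_filter_cyclicNorm_le (d : ℕ) :
    (Finset.univ.filter fun a : Fin m => cyclicNorm a ≤ d).card ≤ 2 * d + 2 := by
  have hval : (Finset.univ.filter fun a : Fin m => a.val < d + 1).card ≤ d + 1 :=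
    Fin.card_filter_val_lt.trans_le (min_le_right _ _)
  have hneg : (Finset.univ.filter fun a : Fin m => (-a).val < d + 1).card ≤ d + 1 := by
    refine (Finset.card_le_card_of_injOn (fun a => -a) ?_ neg_injective.injOn).trans hval
    intro a ha
    simpa using ha
  calc (Finset.univ.filter fun a : Fin m => cyclicNorm a ≤ d).card
      ≤ ((Finset.univ.filter fun a : Fin m => a.val < d + 1) ∪
          Finset.univ.filter fun a : Fin m => (-a).val < d + 1).card := by
        refine Finset.card_le_card fun a ha => ?_
        simpa [cyclicNorm, Nat.lt_succ_iff] using ha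
    _ ≤ 2 * d + 2 := (Finset.card_union_le _ _).trans (by omega)

lemma ballCard_le (m d : ℕ) : ballCard m d ≤ (2 * d + 2) ^ 2 := by
  refine le_trans ?_ (Nat.pow_le_pow_left (card_filter_cyclicNorm_le (m := m) d) 2)
  rw [sq, ← Finset.card_product]
  refine Finset.card_le_card fun w hw => ?_
  simp only [Finset.mem_product, Finset.mem_filter, Finset.mem_univ, true_and] at hw ⊢
  omega

end TorusBalls

section BalancedPlacements

variable {m M K : ℕ}

/-- The files cached by the node `v`. -/
noncomputable def cachedFiles (ω : Placement m M K) (v : Node m) : Finset (Fin K) :=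
  Finset.univ.filter fun j => cached ω v j

lemma cachedFiles_eq_image (ω : Placement m M K) (v : Node m) :
    cachedFiles ω v = Finset.univ.image (ω v) := by
  ext j
  rw [cachedFiles, Finset.mem_filter]
  simp [cached]

lemma card_cachedFiles_le (ω : Placement m M K) (v : Node m) : (cachedFiles ω v).card ≤ M := by
  rw [cachedFiles_eq_image]
  exact Finset.card_image_le.trans (Finset.card_fin M).le

variable [NeZero m]

/-- The expected number of cache slots within distance `r` of a node that hold a given file. -/
noncomputable def slotMean (m M K r : ℕ) : ℝ := ballCard m r * M / K

lemma slotMean_pos (hM : 0 < M) (hK : 0 < K) (r : ℕ) : 0 < slotMean m M K r := by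
  have := ballCard_pos m r
  unfold slotMean
  positivity

/-- A placement in which all candidate sets and all sets of cached files have the typical order
of magnitude. -/
structure IsBalanced (r : ℕ) (ω : Placement m M K) : Prop where
  le_card_candidates : ∀ ρ, slotMean m M K r / 8 ≤ (candidates r ω ρ).card
  card_candidates_le : ∀ ρ, ((candidates r ω ρ).card : ℝ) ≤ 3 * slotMean m M K r
  le_card_cachedFiles : ∀ v, (M : ℝ) / 4 ≤ (cachedFiles ω v).card

lemma expect_mem_candidates (r : ℕ) (ω : Placement m M K) (v : Node m) :
    𝔼 ρ, (if v ∈ candidates r ω ρ then (1 : ℝ) else 0) =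
      ballCard m r * (cachedFiles ω v).card / (m ^ 2 * K) := by
  have hprod : (Finset.univ.filter fun ρ => v ∈ candidates r ω ρ) =
      (Finset.univ.filter fun u => torusDist v u ≤ r) ×ˢ cachedFiles ω v := by
    ext ρ
    simp [candidates, candSet, cachedFiles, and_comm, torusDist_comm v]
  rw [expect_ite_eq_card_filter_div, hprod, Finset.card_product, card_filter_torusDist_le]
  simp [sq]

variable {r : ℕ} {ω : Placement m M K}

lemma IsBalanced.candidates_nonempty (hω : IsBalanced r ω) (hM : 0 < M) (hK : 0 < K)
    (ρ : Node m × Fin K) : (candidates r ω ρ).Nonempty := by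
  have hpos := slotMean_pos (m := m) hM hK r
  exact Finset.card_pos.mp (Nat.cast_pos.mp ((by positivity : (0 : ℝ) < _).trans_le
    (hω.le_card_candidates ρ)))

lemma IsBalanced.le_hitProb (hω : IsBalanced r ω) (hM : 0 < M) (hK : 0 < K) (v : Node m) :
    1 / 12 / ((m ^ 2 : ℕ) : ℝ) ≤ hitProb (candidates r ω) v := by
  have hm : (m : ℝ) ≠ 0 := NeZero.ne _
  have hb : (ballCard m r : ℝ) ≠ 0 := Nat.cast_ne_zero.mpr (ballCard_pos m r).ne'
  have hpos := slotMean_pos (m := m) hM hK r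
  calc 1 / 12 / ((m ^ 2 : ℕ) : ℝ)
      = ballCard m r * (M / 4) / (m ^ 2 * K) * (1 / (3 * slotMean m M K r)) := by
        unfold slotMean
        push_cast
        field_simp
        norm_num
    _ ≤ ballCard m r * (cachedFiles ω v).card / (m ^ 2 * K) * (1 / (3 * slotMean m M K r)) := by
        gcongr
        exact hω.le_card_cachedFiles v
    _ = 𝔼 ρ, (if v ∈ candidates r ω ρ then 1 else 0) * (1 / (3 * slotMean m M K r)) := by
        rw [← expect_mem_candidates, Finset.expect_mul]
    _ ≤ hitProb (candidates r ω) v := by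
        refine Finset.expect_le_expect fun ρ _ => ?_
        have := Finset.card_pos.mpr (hω.candidates_nonempty hM hK ρ)
        by_cases hv : v ∈ candidates r ω ρ
        · simpa [unifWeight, hv] using inv_anti₀ (by positivity) (hω.card_candidates_le ρ)
        · simp [unifWeight, hv]

lemma IsBalanced.hitProb_le (hω : IsBalanced r ω) (hM : 0 < M) (hK : 0 < K) (v : Node m) :
    hitProb (candidates r ω) v ≤ 8 / ((m ^ 2 : ℕ) : ℝ) := by
  have hm : (m : ℝ) ≠ 0 := NeZero.ne _
  have hb : (ballCard m r : ℝ) ≠ 0 := Nat.cast_ne_zero.mpr (ballCard_pos m r).ne'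
  have hpos := slotMean_pos (m := m) hM hK r
  calc hitProb (candidates r ω) v
      ≤ 𝔼 ρ, (if v ∈ candidates r ω ρ then 1 else 0) * (1 / (slotMean m M K r / 8)) := by
        refine Finset.expect_le_expect fun ρ _ => ?_
        by_cases hv : v ∈ candidates r ω ρ
        · simpa [unifWeight, hv] using inv_anti₀ (by positivity) (hω.le_card_candidates ρ)
        · simp [unifWeight, hv]
    _ = ballCard m r * (cachedFiles ω v).card / (m ^ 2 * K) * (1 / (slotMean m M K r / 8)) := by
        rw [← expect_mem_candidates, Finset.expect_mul]
    _ ≤ ballCard m r * M / (m ^ 2 * K) * (1 / (slotMean m M K r / 8)) := by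
        gcongr
        exact card_cachedFiles_le ω v
    _ = 8 / ((m ^ 2 : ℕ) : ℝ) := by
        unfold slotMean
        push_cast
        field_simp

lemma IsBalanced.expect_near_le (hω : IsBalanced r ω) (hM : 0 < M) (hK : 0 < K) {d : ℕ}
    (hd : 32 * ballCard m d ≤ ballCard m r) :
    𝔼 ρ, 𝔼 v ∈ candidates r ω ρ, (if torusDist ρ.1 v ≤ d then (1 : ℝ) else 0) ≤ 1 / 4 := by
  have hm : (m : ℝ) ≠ 0 := NeZero.ne _
  have hd' : 32 * (ballCard m d : ℝ) ≤ ballCard m r := by exact_mod_cast hd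
  have hb : (0 : ℝ) < ballCard m r := Nat.cast_pos.mpr (ballCard_pos m r)
  have hpos := slotMean_pos (m := m) hM hK r
  have hnear : ∀ ρ, 𝔼 v ∈ candidates r ω ρ, (if torusDist ρ.1 v ≤ d then (1 : ℝ) else 0) ≤
      (∑ v, if v ∈ candidates d ω ρ then 1 else 0) * (1 / (slotMean m M K r / 8)) := by
    intro ρ
    rw [expect_ite_eq_card_filter_div, Finset.sum_boole, mul_one_div]
    gcongr
    · intro v hv
      simp only [candidates, candSet, Finset.mem_filter, Finset.mem_univ, true_and] at hv ⊢
      exact ⟨hv.1.1, hv.2⟩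
    · exact hω.le_card_candidates ρ
  calc 𝔼 ρ, 𝔼 v ∈ candidates r ω ρ, (if torusDist ρ.1 v ≤ d then (1 : ℝ) else 0)
      ≤ 𝔼 ρ, (∑ v, if v ∈ candidates d ω ρ then 1 else 0) * (1 / (slotMean m M K r / 8)) :=
        Finset.expect_le_expect fun ρ _ => hnear ρ
    _ = (∑ v, ballCard m d * (cachedFiles ω v).card / (m ^ 2 * K : ℝ)) *
          (1 / (slotMean m M K r / 8)) := by
        simp only [← Finset.expect_mul, Finset.expect_sum_comm, expect_mem_candidates]
    _ ≤ (∑ _v : Node m, ballCard m d * M / (m ^ 2 * K : ℝ)) * (1 / (slotMean m M K r / 8)) := by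
        gcongr with v
        exact card_cachedFiles_le ω v
    _ = 8 * ballCard m d / ballCard m r := by
        simp only [slotMean, Finset.sum_const, Finset.card_univ, Fintype.card_prod,
          Fintype.card_fin, nsmul_eq_mul, Nat.cast_mul]
        field_simp
    _ ≤ 1 / 4 := by
        rw [div_le_iff₀ hb]
        linarith

end BalancedPlacements

section UniformProbability

variable {Ω : Type*} [Fintype Ω]

lemma unifProb_eq_expect (E : Set Ω) : unifProb E = 𝔼 ω, (if ω ∈ E then (1 : ℝ) else 0) :=
  (expect_ite_eq_card_filter_div _ _).symm

lemma unifProb_nonneg (E : Set Ω) : 0 ≤ unifProb E := by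
  unfold unifProb
  positivity

lemma unifProb_mono {E F : Set Ω} (h : E ⊆ F) : unifProb E ≤ unifProb F := by
  unfold unifProb
  gcongr

lemma unifProb_le_expect {E : Set Ω} {F : Ω → ℝ} (hF : ∀ ω, 0 ≤ F ω) (hE : ∀ ω ∈ E, 1 ≤ F ω) :
    unifProb E ≤ 𝔼 ω, F ω := by
  rw [unifProb_eq_expect]
  refine Finset.expect_le_expect fun ω _ => ?_
  split_ifs with h
  exacts [hE ω h, hF ω]

lemma unifProb_union_le (E F : Set Ω) : unifProb (E ∪ F) ≤ unifProb E + unifProb F := by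
  rw [unifProb_eq_expect E, unifProb_eq_expect F, ← Finset.expect_add_distrib]
  refine unifProb_le_expect (fun ω => by positivity) fun ω hω => ?_
  rcases hω with h | h
  · rw [if_pos h]
    exact le_add_of_nonneg_right (by positivity)
  · rw [if_pos h]
    exact le_add_of_nonneg_left (by positivity)

lemma unifProb_iUnion_le {ι : Type*} [Fintype ι] {E : ι → Set Ω} {b : ℝ}
    (hE : ∀ i, unifProb (E i) ≤ b) : unifProb (⋃ i, E i) ≤ Fintype.card ι * b := by
  calc unifProb (⋃ i, E i)
      ≤ 𝔼 ω, ∑ i, (if ω ∈ E i then (1 : ℝ) else 0) := by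
        refine unifProb_le_expect (fun ω => Finset.sum_nonneg fun i _ => by positivity)
          fun ω hω => ?_
        obtain ⟨i, hi⟩ := Set.mem_iUnion.mp hω
        exact (if_pos hi).ge.trans (Finset.single_le_sum
          (f := fun i => if ω ∈ E i then (1 : ℝ) else 0) (fun _ _ => by positivity)
          (Finset.mem_univ i))
    _ = ∑ i, unifProb (E i) := by simp only [Finset.expect_sum_comm, unifProb_eq_expect]
    _ ≤ Fintype.card ι * b := by
        simpa using Finset.sum_le_card_nsmul Finset.univ _ b fun i _ => hE i

end UniformProbability

section ProductSpaces

variable {ι A : Type*} [Fintype ι] [DecidableEq ι] [Fintype A]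

lemma expect_prod_apply (f : ι → A → ℝ) :
    𝔼 ω : ι → A, ∏ i, f i (ω i) = ∏ i, 𝔼 a, f i a := by
  simp only [Fintype.expect_eq_sum_div_card, Finset.prod_div_distrib, Fintype.prod_sum,
    Fintype.card_fun, Finset.prod_const, Finset.card_univ, Nat.cast_pow]

variable [Nonempty A]

lemma unifProb_apply_mem (i : ι) (E : Set A) :
    unifProb {ω : ι → A | ω i ∈ E} = unifProb E := by
  have hfactor (k : ι) : 𝔼 a, (if k = i then (if a ∈ E then (1 : ℝ) else 0) else 1) =
      if k = i then unifProb E else 1 := by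
    split_ifs
    · exact (unifProb_eq_expect E).symm
    · exact Finset.expect_const Finset.univ_nonempty _
  calc unifProb {ω : ι → A | ω i ∈ E}
      = 𝔼 ω : ι → A, ∏ k, (if k = i then (if ω k ∈ E then 1 else 0) else 1) := by
        rw [unifProb_eq_expect]
        exact Finset.expect_congr rfl fun ω _ => by simp [Finset.prod_ite_eq']
    _ = unifProb E := by
        rw [expect_prod_apply fun k a => if k = i then (if a ∈ E then (1 : ℝ) else 0) else 1]
        simp [hfactor]

lemma unifProb_exists_eq (j : A) :
    unifProb {a : ι → A | ∃ i, a i = j} =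
      1 - (1 - 1 / (Fintype.card A : ℝ)) ^ Fintype.card ι := by
  calc unifProb {a : ι → A | ∃ i, a i = j}
      = 𝔼 a : ι → A, (1 - ∏ i, (1 - if a i = j then 1 else 0)) := by
        rw [unifProb_eq_expect]
        refine Finset.expect_congr rfl fun a _ => ?_
        split_ifs with h
        · obtain ⟨i, hi⟩ := h
          rw [Finset.prod_eq_zero (Finset.mem_univ i) (by simp [hi]), sub_zero]
        · rw [Finset.prod_eq_one fun i _ => by rw [if_neg fun hi => h ⟨i, hi⟩, sub_zero], sub_self]
    _ = 1 - ∏ _i : ι, 𝔼 a : A, (1 - if a = j then (1 : ℝ) else 0) := by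
        rw [Finset.expect_sub_distrib, Finset.expect_const Finset.univ_nonempty,
          expect_prod_apply fun (_ : ι) a => 1 - if a = j then (1 : ℝ) else 0]
    _ = 1 - (1 - 1 / (Fintype.card A : ℝ)) ^ Fintype.card ι := by
        simp [Finset.expect_sub_distrib, Finset.expect_const]

lemma expect_pow_card_filter (H : Set A) [DecidablePred (· ∈ H)] (B : Finset ι) (y : ℝ) :
    𝔼 ω : ι → A, y ^ (B.filter fun i => ω i ∈ H).card = (1 + (y - 1) * unifProb H) ^ B.card := by
  have hfactor (ω : ι → A) : y ^ (B.filter fun i => ω i ∈ H).card =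
      ∏ i, (if i ∈ B then 1 + (y - 1) * (if ω i ∈ H then 1 else 0) else 1) := by
    rw [Finset.prod_ite_mem, Finset.univ_inter, Finset.prod_congr rfl fun i _ =>
      show 1 + (y - 1) * (if ω i ∈ H then 1 else 0) = if ω i ∈ H then y else 1 by
        split_ifs <;> ring]
    rw [Finset.prod_ite, Finset.prod_const, Finset.prod_const_one, mul_one]
  simp only [hfactor, expect_prod_apply fun i a =>
    if i ∈ B then 1 + (y - 1) * (if a ∈ H then (1 : ℝ) else 0) else 1]
  rw [← Finset.prod_const, ← Finset.univ_inter B, ← Finset.prod_ite_mem, Finset.univ_inter]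
  refine Finset.prod_congr rfl fun i _ => ?_
  split_ifs
  · rw [Finset.expect_add_distrib, ← Finset.mul_expect, unifProb_eq_expect,
      Finset.expect_const Finset.univ_nonempty]
    congr!
  · exact Finset.expect_const Finset.univ_nonempty _

lemma expect_exp_card_filter_le (H : Set A) [DecidablePred (· ∈ H)] (B : Finset ι) (θ : ℝ) :
    𝔼 ω : ι → A, Real.exp (θ * (B.filter fun i => ω i ∈ H).card) ≤
      Real.exp ((Real.exp θ - 1) * (unifProb H * B.card)) := by
  have hp : unifProb H ≤ 1 := div_le_one_of_le₀
    (by exact_mod_cast Finset.card_le_univ _) (Nat.cast_nonneg _)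
  simp only [mul_comm θ, Real.exp_nat_mul, expect_pow_card_filter]
  calc (1 + (Real.exp θ - 1) * unifProb H) ^ B.card
      ≤ Real.exp ((Real.exp θ - 1) * unifProb H) ^ B.card := by
        gcongr
        · nlinarith [unifProb_nonneg H, Real.exp_pos θ]
        · linarith [Real.add_one_le_exp ((Real.exp θ - 1) * unifProb H)]
    _ = Real.exp ((Real.exp θ - 1) * (unifProb H * B.card)) := by
        rw [← Real.exp_nat_mul]
        ring_nf

lemma unifProb_card_filter_lt_le (H : Set A) [DecidablePred (· ∈ H)] (B : Finset ι) (t : ℝ) :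
    unifProb {ω : ι → A | ((B.filter fun i => ω i ∈ H).card : ℝ) < t} ≤
      Real.exp (t - unifProb H * B.card / 2) := by
  have he : Real.exp (-1) - 1 ≤ -(1 / 2) := by linarith [Real.exp_neg_one_lt_half]
  calc unifProb {ω : ι → A | ((B.filter fun i => ω i ∈ H).card : ℝ) < t}
      ≤ 𝔼 ω : ι → A, Real.exp t * Real.exp (-1 * (B.filter fun i => ω i ∈ H).card) := by
        refine unifProb_le_expect (fun ω => by positivity) fun ω hω => ?_
        rw [← Real.exp_add]
        exact Real.one_le_exp (by linarith [Set.mem_ofPred_eq ▸ hω])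
    _ ≤ Real.exp t * Real.exp ((Real.exp (-1) - 1) * (unifProb H * B.card)) := by
        rw [← Finset.mul_expect]
        gcongr
        exact expect_exp_card_filter_le H B (-1)
    _ ≤ Real.exp t * Real.exp (-(1 / 2) * (unifProb H * B.card)) := by
        have := unifProb_nonneg H
        gcongr
    _ = Real.exp (t - unifProb H * B.card / 2) := by
        rw [← Real.exp_add]
        ring_nf

lemma unifProb_lt_card_filter_le (H : Set A) [DecidablePred (· ∈ H)] (B : Finset ι) (t : ℝ) :
    unifProb {ω : ι → A | t < (B.filter fun i => ω i ∈ H).card} ≤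
      Real.exp (2 * (unifProb H * B.card) - t) := by
  have he : Real.exp 1 - 1 ≤ 2 := by linarith [Real.exp_one_lt_d9]
  calc unifProb {ω : ι → A | t < (B.filter fun i => ω i ∈ H).card}
      ≤ 𝔼 ω : ι → A, Real.exp (-t) * Real.exp (1 * (B.filter fun i => ω i ∈ H).card) := by
        refine unifProb_le_expect (fun ω => by positivity) fun ω hω => ?_
        rw [← Real.exp_add]
        exact Real.one_le_exp (by linarith [Set.mem_ofPred_eq ▸ hω])
    _ ≤ Real.exp (-t) * Real.exp ((Real.exp 1 - 1) * (unifProb H * B.card)) := by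
        rw [← Finset.mul_expect]
        gcongr
        exact expect_exp_card_filter_le H B 1
    _ ≤ Real.exp (-t) * Real.exp (2 * (unifProb H * B.card)) := by
        have := unifProb_nonneg H
        gcongr
    _ = Real.exp (2 * (unifProb H * B.card) - t) := by
        rw [← Real.exp_add]
        ring_nf

end ProductSpaces

section PlacementConcentration

variable {M K : ℕ}

lemma half_le_one_sub_one_sub_inv_pow (hK : 0 < K) (hMK : M ≤ K) :
    (M : ℝ) / K / 2 ≤ 1 - (1 - 1 / (K : ℝ)) ^ M := by
  have hK1 : 1 / (K : ℝ) ≤ 1 := by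
    rw [one_div]
    exact inv_le_one_of_one_le₀ (by exact_mod_cast hK)
  have hx0 : (0 : ℝ) ≤ M / K := by positivity
  have hx1 : (M : ℝ) / K ≤ 1 := div_le_one_of_le₀ (by exact_mod_cast hMK) (Nat.cast_nonneg _)
  have hexp : (1 - 1 / (K : ℝ)) ^ M ≤ Real.exp (-(M / K : ℝ)) := by
    calc (1 - 1 / (K : ℝ)) ^ M ≤ Real.exp (-(1 / K : ℝ)) ^ M :=
          pow_le_pow_left₀ (by linarith) (Real.one_sub_le_exp_neg _) M
      _ = Real.exp (-(M / K : ℝ)) := by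
          rw [← Real.exp_nat_mul]
          ring_nf
  have hinv : Real.exp (-(M / K : ℝ)) ≤ (M / K + 1 : ℝ)⁻¹ := by
    rw [Real.exp_neg]
    gcongr
    exact Real.add_one_le_exp _
  have hhalf : (M / K + 1 : ℝ)⁻¹ ≤ 1 - M / K / 2 := by
    rw [inv_le_iff_one_le_mul₀ (by positivity)]
    nlinarith
  linarith

lemma le_unifProb_exists_eq (hMK : M ≤ K) (j : Fin K) :
    (M : ℝ) / K / 2 ≤ unifProb {a : Fin M → Fin K | ∃ i, a i = j} := by
  have : Nonempty (Fin K) := ⟨j⟩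
  simpa [unifProb_exists_eq] using half_le_one_sub_one_sub_inv_pow j.pos hMK

lemma unifProb_exists_eq_le (j : Fin K) :
    unifProb {a : Fin M → Fin K | ∃ i, a i = j} ≤ (M : ℝ) / K := by
  have : Nonempty (Fin K) := ⟨j⟩
  have hslot : ∀ i : Fin M, unifProb {a : Fin M → Fin K | a i = j} ≤ 1 / K := fun i => by
    rw [show {a : Fin M → Fin K | a i = j} = {a | a i ∈ ({j} : Set (Fin K))} from rfl,
      unifProb_apply_mem]
    simp [unifProb, Finset.filter_eq']
  rw [Set.ofPred_exists]
  exact (unifProb_iUnion_le hslot).trans_eq (by rw [Fintype.card_fin, mul_one_div])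

lemma unifProb_card_image_lt_le (hMK : M ≤ K) :
    unifProb {a : Fin M → Fin K | ((Finset.univ.image a).card : ℝ) < M / 4} ≤
      Real.exp (-(M / 8)) := by
  rcases M.eq_zero_or_pos with rfl | hM
  · simp [unifProb]
  have hK : 0 < K := hM.trans_le hMK
  have : Nonempty (Fin K) := ⟨⟨0, hK⟩⟩
  have hMK' : (M : ℝ) ≤ K := Nat.cast_le.mpr hMK
  set w : Fin K → ℝ := unifWeight Finset.univ with hw
  have hnew : ∀ h : List (Fin K), True → (h.toFinset.card : ℝ) < M / 4 →
      3 / 4 ≤ ∑ x, w x * (if h.toFinset.card < (x :: h).toFinset.card then 1 else 0) := by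
    intro h _ hh
    have hcompl : (Finset.univ.filter fun x => h.toFinset.card < (x :: h).toFinset.card) =
        h.toFinsetᶜ := by
      ext x
      rw [Finset.mem_filter, List.toFinset_cons, Finset.card_insert_eq_ite]
      split_ifs <;> simp_all
    rw [hw, sum_unifWeight_mul, expect_ite_eq_card_filter_div, hcompl, Finset.card_compl,
      Nat.cast_sub (Finset.card_le_univ _), Finset.card_univ, Fintype.card_fin,
      le_div_iff₀ (by positivity)]
    linarith
  have hw1 : w ∈ stdSimplex ℝ (Fin K) :=
    ⟨unifWeight_nonneg _, by
      simpa [Finset.expect_const] using sum_unifWeight_mul Finset.univ fun _ : Fin K => (1 : ℝ)⟩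
  calc unifProb {a : Fin M → Fin K | ((Finset.univ.image a).card : ℝ) < M / 4}
      = seqProb w M (fun h => (h.toFinset.card : ℝ) < M / 4) [] := by
        rw [seqProb, seqExp_eq_sum, unifProb_eq_expect, Fintype.expect_eq_sum_div_card,
          Finset.sum_div]
        refine Finset.sum_congr rfl fun a _ => ?_
        have himage : ((List.ofFn a).reverse ++ []).toFinset = Finset.univ.image a := by
          ext j
          simp
        rw [himage]
        simp [hw, unifWeight, mul_comm, div_eq_mul_inv]
    _ ≤ Real.exp (1 * (M / 4) - (1 - Real.exp (-1)) * (3 / 4) * M) :=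
        seqProb_counter_lt_le hw1 zero_le_one (fun _ _ _ => trivial)
          (fun h x => Finset.card_le_card (by simp)) hnew M trivial
    _ ≤ Real.exp (-(M / 8)) := by
        gcongr
        nlinarith [Real.exp_neg_one_lt_half, (Nat.cast_pos (α := ℝ)).mpr hM]

variable {m : ℕ}

lemma unifProb_card_cachedFiles_lt_le (hM : 0 < M) (hMK : M ≤ K) (v : Node m) :
    unifProb {ω : Placement m M K | ((cachedFiles ω v).card : ℝ) < M / 4} ≤
      Real.exp (-(M / 8)) := by
  have : Nonempty (Fin K) := ⟨⟨0, hM.trans_le hMK⟩⟩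
  simp only [cachedFiles_eq_image]
  exact (unifProb_apply_mem v {a | ((Finset.univ.image a).card : ℝ) < M / 4}).trans_le
    (unifProb_card_image_lt_le hMK)

lemma candidates_eq_filter (r : ℕ) (ω : Placement m M K) (ρ : Node m × Fin K) :
    candidates r ω ρ = (Finset.univ.filter fun v => torusDist ρ.1 v ≤ r).filter
      fun v => ω v ∈ {a : Fin M → Fin K | ∃ i, a i = ρ.2} := by
  ext v
  simp [candidates, candSet, cached, and_comm]

variable [NeZero m]

lemma unifProb_card_candidates_lt_le (hMK : M ≤ K) (r : ℕ) (ρ : Node m × Fin K) :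
    unifProb {ω : Placement m M K | ((candidates r ω ρ).card : ℝ) < slotMean m M K r / 8} ≤
      Real.exp (-(slotMean m M K r / 8)) := by
  have : Nonempty (Fin K) := ⟨ρ.2⟩
  simp only [candidates_eq_filter]
  refine (unifProb_card_filter_lt_le {a : Fin M → Fin K | ∃ i, a i = ρ.2}
    (Finset.univ.filter fun v => torusDist ρ.1 v ≤ r) _).trans (Real.exp_le_exp.mpr ?_)
  rw [card_filter_torusDist_le]
  have hhit := mul_le_mul_of_nonneg_right (le_unifProb_exists_eq hMK ρ.2)
    (Nat.cast_nonneg (α := ℝ) (ballCard m r))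
  rw [show (M : ℝ) / K / 2 * ballCard m r = slotMean m M K r / 2 by rw [slotMean]; ring] at hhit
  linarith

lemma unifProb_lt_card_candidates_le (r : ℕ) (ρ : Node m × Fin K) :
    unifProb {ω : Placement m M K | 3 * slotMean m M K r < (candidates r ω ρ).card} ≤
      Real.exp (-slotMean m M K r) := by
  have : Nonempty (Fin K) := ⟨ρ.2⟩
  simp only [candidates_eq_filter]
  refine (unifProb_lt_card_filter_le {a : Fin M → Fin K | ∃ i, a i = ρ.2}
    (Finset.univ.filter fun v => torusDist ρ.1 v ≤ r) _).trans (Real.exp_le_exp.mpr ?_)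
  rw [card_filter_torusDist_le]
  have hhit := mul_le_mul_of_nonneg_right (unifProb_exists_eq_le (M := M) ρ.2)
    (Nat.cast_nonneg (α := ℝ) (ballCard m r))
  rw [show (M : ℝ) / K * ballCard m r = slotMean m M K r by rw [slotMean]; ring] at hhit
  linarith

lemma unifProb_not_isBalanced_le (hM : 0 < M) (hMK : M ≤ K) (r : ℕ) :
    unifProb {ω : Placement m M K | ¬ IsBalanced r ω} ≤
      2 * m ^ 2 * K * Real.exp (-(slotMean m M K r / 8)) + m ^ 2 * Real.exp (-(M / 8)) := by
  have hs := slotMean_pos (m := m) hM (hM.trans_le hMK) r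
  have hsub : {ω : Placement m M K | ¬ IsBalanced r ω} ⊆
      (⋃ ρ, {ω | ((candidates r ω ρ).card : ℝ) < slotMean m M K r / 8} ∪
        {ω | 3 * slotMean m M K r < (candidates r ω ρ).card}) ∪
      ⋃ v, {ω | ((cachedFiles ω v).card : ℝ) < M / 4} := by
    intro ω hω
    by_contra hnot
    simp only [Set.mem_union, Set.mem_iUnion, Set.mem_ofPred_eq, not_or, not_exists, not_lt]
      at hnot
    exact hω ⟨fun ρ => (hnot.1 ρ).1, fun ρ => (hnot.1 ρ).2, hnot.2⟩
  have hcand (ρ : Node m × Fin K) :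
      unifProb ({ω : Placement m M K | ((candidates r ω ρ).card : ℝ) < slotMean m M K r / 8} ∪
        {ω | 3 * slotMean m M K r < (candidates r ω ρ).card}) ≤
      2 * Real.exp (-(slotMean m M K r / 8)) := by
    have hlow := unifProb_card_candidates_lt_le hMK r ρ
    have hupp := unifProb_lt_card_candidates_le (M := M) r ρ
    have hexp : Real.exp (-slotMean m M K r) ≤ Real.exp (-(slotMean m M K r / 8)) :=
      Real.exp_le_exp.mpr (by linarith)
    exact (unifProb_union_le _ _).trans (by linarith)
  calc unifProb {ω : Placement m M K | ¬ IsBalanced r ω}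
      ≤ Fintype.card (Node m × Fin K) * (2 * Real.exp (-(slotMean m M K r / 8))) +
          Fintype.card (Node m) * Real.exp (-(M / 8)) :=
        (unifProb_mono hsub).trans <| (unifProb_union_le _ _).trans <|
          add_le_add (unifProb_iUnion_le hcand)
            (unifProb_iUnion_le (unifProb_card_cachedFiles_lt_le hM hMK))
    _ = 2 * m ^ 2 * K * Real.exp (-(slotMean m M K r / 8)) + m ^ 2 * Real.exp (-(M / 8)) := by
        simp only [Fintype.card_prod, Fintype.card_fin]
        push_cast
        ring

end PlacementConcentration

section FiniteBounds

lemma mul_one_sub_unifProb_le_expect {Ω : Type*} [Fintype Ω] [Nonempty Ω] {E : Set Ω}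
    {f : Ω → ℝ} {c : ℝ} (hf : ∀ ω, 0 ≤ f ω) (hc : ∀ ω ∉ E, c ≤ f ω) :
    c * (1 - unifProb E) ≤ 𝔼 ω, f ω := by
  calc c * (1 - unifProb E) = 𝔼 ω, c * (1 - if ω ∈ E then (1 : ℝ) else 0) := by
        rw [← Finset.mul_expect, Finset.expect_sub_distrib,
          Finset.expect_const Finset.univ_nonempty, unifProb_eq_expect]
    _ ≤ 𝔼 ω, f ω := by
        refine Finset.expect_le_expect fun ω _ => ?_
        split_ifs with h
        · rw [sub_self, mul_zero]
          exact hf ω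
        · rw [sub_zero, mul_one]
          exact hc ω h

/-- The bound, for `x` requests on `x` nodes in a balanced placement whose candidate sets have
at least `s` elements, on the probability that some node gets load at least `5120 + j + k`; the
parameter `θ` is that of a Chernoff bound and is free. -/
noncomputable def upperTailBound (x s : ℝ) (j k : ℕ) (θ : ℝ) : ℝ :=
  (j + 1) * (x * x * Real.exp (-(squaringSeq (1 / 64) (1 / 2) j ^ 2 * s))) +
    x * Real.exp (Real.exp θ * (16 * squaringSeq (1 / 64) (1 / 2) j) - θ * k)

/-- The bound, for `x` requests on `x` nodes in a balanced placement whose candidate sets have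
at least `s` elements, on the probability that all loads are less than `L`. -/
noncomputable def lowerTailBound (x s : ℝ) (L : ℕ) : ℝ :=
  L * (x * x * Real.exp (-(squaringSeq (384 * L) (1 / (384 * L)) L * s)))

variable {m M r : ℕ} [NeZero m]

lemma IsBalanced.seqProb_exists_load_ge_le {ω : Placement m M (m ^ 2)} (hω : IsBalanced r ω)
    (hM : 0 < M) {s : ℝ} (hs0 : 0 ≤ s) (hs : s ≤ slotMean m M (m ^ 2) r / 8) (j k : ℕ) {θ : ℝ}
    (hθ : 0 ≤ θ) :
    seqProb (stepWeight (candidates r ω)) (m ^ 2) (fun h => ∃ v, 5120 + j + k ≤ load h v) [] ≤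
      upperTailBound ((m ^ 2 : ℕ) : ℝ) s j k θ := by
  have hK : 0 < m ^ 2 := pow_pos (NeZero.pos m) 2
  have : Nonempty (Node m × Fin (m ^ 2)) := ⟨((0, 0), ⟨0, hK⟩)⟩
  refine (_root_.seqProb_exists_load_ge_le (hω.candidates_nonempty hM hK) (C := 8) (by norm_num)
    (hω.hitProb_le hM hK) hs0 (fun ρ => hs.trans (hω.le_card_candidates ρ)) (i₀ := 5120)
    (by norm_num) j k hθ).trans_eq ?_
  simp only [upperTailBound, Fintype.card_prod, Fintype.card_fin, ← sq]
  norm_num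

lemma IsBalanced.seqProb_forall_load_lt_le {ω : Placement m M (m ^ 2)} (hω : IsBalanced r ω)
    (hM : 0 < M) {s : ℝ} (hs0 : 0 ≤ s) (hs : s ≤ slotMean m M (m ^ 2) r / 8) {L : ℕ}
    (hL : 0 < L) (hLm : L ≤ m ^ 2) :
    seqProb (stepWeight (candidates r ω)) (m ^ 2) (fun h => ∀ v, load h v < L) [] ≤
      lowerTailBound ((m ^ 2 : ℕ) : ℝ) s L := by
  have hK : 0 < m ^ 2 := pow_pos (NeZero.pos m) 2
  have : Nonempty (Node m × Fin (m ^ 2)) := ⟨((0, 0), ⟨0, hK⟩)⟩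
  refine (_root_.seqProb_forall_load_lt_le (hω.candidates_nonempty hM hK) (c := 1 / 12)
    (by norm_num) (by norm_num) (hω.le_hitProb hM hK) hs0
    (fun ρ => hs.trans (hω.le_card_candidates ρ)) hL hLm).trans_eq ?_
  have hq : 32 * (L : ℝ) / (1 / 12) = 384 * L := by ring
  have hq' : 1 / 12 / (32 * (L : ℝ)) = 1 / (384 * L) := by rw [div_div]; ring
  simp only [lowerTailBound, Fintype.card_prod, Fintype.card_fin, ← sq, hq, hq', Nat.cast_pow]

lemma IsBalanced.one_sub_le_seqProb_maxLoad {ω : Placement m M (m ^ 2)} (hω : IsBalanced r ω)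
    (hM : 0 < M) {s : ℝ} (hs0 : 0 ≤ s) (hs : s ≤ slotMean m M (m ^ 2) r / 8) (j k : ℕ) {θ : ℝ}
    (hθ : 0 ≤ θ) {L : ℕ} (hL : 0 < L) (hLm : L ≤ m ^ 2) {P : ℕ → Prop}
    (hP : ∀ l, L ≤ l → l < 5120 + j + k → P l) :
    1 - (upperTailBound ((m ^ 2 : ℕ) : ℝ) s j k θ + lowerTailBound ((m ^ 2 : ℕ) : ℝ) s L) ≤
      seqProb (stepWeight (candidates r ω)) (m ^ 2)
        (fun h => P (Finset.univ.sup (load h))) [] := by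
  have hw := stepWeight_mem_stdSimplex
    (hω.candidates_nonempty hM (pow_pos (NeZero.pos m) 2))
  have hnot : ∀ h : List (Step (Node m × Fin (m ^ 2)) (Node m)),
      ¬ P (Finset.univ.sup (load h)) →
        (∃ v, 5120 + j + k ≤ load h v) ∨ ∀ v, load h v < L := by
    intro h hPh
    by_contra! hload
    obtain ⟨hlt, v, hv⟩ := hload
    exact hPh (hP _ (hv.trans (Finset.le_sup (Finset.mem_univ v)))
      ((Finset.sup_lt_iff (by rw [Nat.bot_eq_zero]; exact (Nat.zero_le _).trans_lt (hlt v))).mpr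
        fun v _ => hlt v))
  have hfail := (seqProb_mono hw.1 hnot (m ^ 2) []).trans (seqProb_or_le hw.1 _ _ _ _)
  have hupp := hω.seqProb_exists_load_ge_le hM hs0 hs j k hθ
  have hlow := hω.seqProb_forall_load_lt_le hM hs0 hs hL hLm
  have hsum := seqProb_add_seqProb_not hw.2
    (fun h => P (Finset.univ.sup (load h))) (m ^ 2) []
  linarith

lemma mul_one_sub_unifProb_le_probII_maxLoadII (hM : 0 < M) {s : ℝ} (hs0 : 0 ≤ s)
    (hs : s ≤ slotMean m M (m ^ 2) r / 8) (j k : ℕ) {θ : ℝ} (hθ : 0 ≤ θ) {L : ℕ} (hL : 0 < L)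
    (hLm : L ≤ m ^ 2) {P : ℕ → Prop} (hP : ∀ l, L ≤ l → l < 5120 + j + k → P l) :
    (1 - (upperTailBound ((m ^ 2 : ℕ) : ℝ) s j k θ + lowerTailBound ((m ^ 2 : ℕ) : ℝ) s L)) *
        (1 - unifProb {ω : Placement m M (m ^ 2) | ¬ IsBalanced r ω}) ≤
      probII m M (m ^ 2) r (m ^ 2) {x | P (maxLoadII x.2.2.1 x.2.2.2)} := by
  have : NeZero (m ^ 2) := ⟨pow_ne_zero 2 (NeZero.ne m)⟩
  rw [probII_maxLoadII_eq_expect]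
  exact mul_one_sub_unifProb_le_expect
    (fun ω => seqProb_nonneg (stepWeight_nonneg _) _ _ _)
    fun ω hω => IsBalanced.one_sub_le_seqProb_maxLoad (not_not.mp hω) hM hs0 hs j k hθ hL hLm hP

lemma mul_one_sub_unifProb_le_commCostII (hM : 0 < M) {d : ℕ}
    (hd : 32 * ballCard m d ≤ ballCard m r) :
    d / 2 * (1 - unifProb {ω : Placement m M (m ^ 2) | ¬ IsBalanced r ω}) ≤
      commCostII m M (m ^ 2) r (m ^ 2) := by
  have hK : 0 < m ^ 2 := pow_pos (NeZero.pos m) 2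
  have : NeZero (m ^ 2) := ⟨hK.ne'⟩
  rw [commCostII_eq_expect]
  refine mul_one_sub_unifProb_le_expect (fun ω => meanCost_nonneg (by simp) _) fun ω hω => ?_
  have hω : IsBalanced r ω := not_not.mp hω
  refine le_meanCost (hω.candidates_nonempty hM hK) (fun ρ v => Nat.cast_nonneg _)
    (Nat.cast_nonneg d) ?_ hK.ne'
  simp only [Nat.cast_le]
  exact hω.expect_near_le hM hK hd

end FiniteBounds

section TailAsymptotics

lemma eventually_exp_neg_mul_rpow_le {a C : ℝ} (ha : 0 < a) (hC : 0 < C) (n : ℕ) :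
    ∀ᶠ x : ℝ in atTop, Real.exp (-(C * x ^ a)) ≤ 1 / x ^ n := by
  have hlog := (isLittleO_log_rpow_atTop ha).bound (show 0 < C / (n + 1) by positivity)
  filter_upwards [hlog, eventually_ge_atTop 1] with x hx h1x
  have hx0 : 0 < x := one_pos.trans_le h1x
  rw [Real.norm_of_nonneg (Real.log_nonneg h1x), Real.norm_of_nonneg (by positivity),
    div_mul_eq_mul_div, le_div_iff₀ (by positivity)] at hx
  calc Real.exp (-(C * x ^ a)) ≤ Real.exp (-(n * Real.log x)) :=
        Real.exp_le_exp.mpr (by linarith [Real.log_nonneg h1x])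
    _ = 1 / x ^ n := by rw [Real.exp_neg, Real.exp_nat_mul, Real.exp_log hx0, one_div]

lemma squaringSeq_one_div (A : ℝ) {q : ℝ} (hq : 0 < q) (j : ℕ) :
    squaringSeq A (1 / q) j = A * Real.exp (-(2 ^ j * Real.log q)) := by
  rw [squaringSeq, Real.exp_neg, ← Real.rpow_natCast, Nat.cast_pow, Nat.cast_two, one_div,
    Real.inv_rpow hq.le, Real.rpow_def_of_pos hq, mul_comm (Real.log q)]

lemma rpow_neg_le_squaringSeq_one_div {A q x a : ℝ} (hA : 1 ≤ A) (hq : 0 < q) (hx : 0 < x)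
    {j : ℕ} (hj : 2 ^ j * Real.log q ≤ a * Real.log x) :
    x ^ (-a) ≤ squaringSeq A (1 / q) j := by
  rw [squaringSeq_one_div _ hq, Real.rpow_def_of_pos hx]
  calc Real.exp (Real.log x * -a) ≤ 1 * Real.exp (-(2 ^ j * Real.log q)) := by
        rw [one_mul, Real.exp_le_exp]
        linarith
    _ ≤ A * Real.exp (-(2 ^ j * Real.log q)) := by gcongr

lemma exists_squaringSeq_half_mem_Icc {A x a : ℝ} (hA : 0 ≤ A) (hx : 0 < x)
    (ha : Real.log 2 ≤ 2 * a * Real.log x) :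
    ∃ j : ℕ, 2 ^ j * Real.log 2 ≤ 2 * a * Real.log x ∧
      squaringSeq A (1 / 2) j ∈ Set.Icc (A * x ^ (-(2 * a))) (A * x ^ (-a)) := by
  have hlog2 : 0 < Real.log 2 := Real.log_pos one_lt_two
  obtain ⟨j, hj, hj'⟩ := exists_nat_pow_near ((one_le_div hlog2).mpr ha) one_lt_two
  rw [le_div_iff₀ hlog2] at hj
  rw [div_lt_iff₀ hlog2, pow_succ] at hj'
  refine ⟨j, hj, ?_⟩
  rw [squaringSeq_one_div A two_pos, Real.rpow_def_of_pos hx, Real.rpow_def_of_pos hx]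
  exact ⟨mul_le_mul_of_nonneg_left (Real.exp_le_exp.mpr (by linarith)) hA,
    mul_le_mul_of_nonneg_left (Real.exp_le_exp.mpr (by linarith)) hA⟩

lemma upperTailBound_le {x δ : ℝ} (hδ : 0 < δ) (hx : 1 ≤ x) {j k : ℕ} (hj : (j : ℝ) + 1 ≤ x)
    (hk : 24 / δ ≤ k)
    (hq : squaringSeq (1 / 64) (1 / 2) j ∈
      Set.Icc (1 / 64 * x ^ (-(2 * (δ / 8)))) (1 / 64 * x ^ (-(δ / 8))))
    (hexp : Real.exp (-(1 / 131072 * x ^ (δ / 2))) ≤ 1 / x ^ 5) :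
    upperTailBound x (x ^ δ / 32) j k (δ / 8 * Real.log x) ≤ 4 / x ^ 2 := by
  have hx0 : 0 < x := one_pos.trans_le hx
  set q := squaringSeq (1 / 64) (1 / 2) j with hq_def
  have hheavy : 1 / 131072 * x ^ (δ / 2) ≤ q ^ 2 * (x ^ δ / 32) := by
    calc 1 / 131072 * x ^ (δ / 2) = (1 / 64 * x ^ (-(2 * (δ / 8)))) ^ 2 * (x ^ δ / 32) := by
          rw [mul_pow, ← Real.rpow_mul_natCast hx0.le,
            show δ / 2 = -(2 * (δ / 8)) * (2 : ℕ) + δ by push_cast; ring, Real.rpow_add hx0]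
          ring
      _ ≤ q ^ 2 * (x ^ δ / 32) := by
          gcongr
          exact hq.1
  have hlast : Real.exp (δ / 8 * Real.log x) * (16 * q) - δ / 8 * Real.log x * k ≤
      1 - (3 : ℕ) * Real.log x := by
    have hcancel : Real.exp (δ / 8 * Real.log x) * x ^ (-(δ / 8)) = 1 := by
      rw [mul_comm (δ / 8), ← Real.rpow_def_of_pos hx0, ← Real.rpow_add hx0, add_neg_cancel,
        Real.rpow_zero]
    have hθq : Real.exp (δ / 8 * Real.log x) * (16 * q) ≤ 1 := by
      calc Real.exp (δ / 8 * Real.log x) * (16 * q)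
          ≤ Real.exp (δ / 8 * Real.log x) * (16 * (1 / 64 * x ^ (-(δ / 8)))) := by
            gcongr
            exact hq.2
        _ = 1 / 4 * (Real.exp (δ / 8 * Real.log x) * x ^ (-(δ / 8))) := by ring
        _ ≤ 1 := by rw [hcancel]; norm_num
    have hθk : 3 * Real.log x ≤ δ / 8 * k * Real.log x :=
      mul_le_mul_of_nonneg_right (by rw [div_le_iff₀ hδ] at hk; linarith) (Real.log_nonneg hx)
    push_cast
    linarith
  calc upperTailBound x (x ^ δ / 32) j k (δ / 8 * Real.log x)
      ≤ x * (x * x * (1 / x ^ 5)) + x * Real.exp (1 - (3 : ℕ) * Real.log x) := by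
        unfold upperTailBound
        gcongr
        exact (Real.exp_le_exp.mpr (neg_le_neg hheavy)).trans hexp
    _ = (1 + Real.exp 1) / x ^ 2 := by
        rw [Real.exp_sub, Real.exp_nat_mul, Real.exp_log hx0]
        field_simp
    _ ≤ 4 / x ^ 2 := by
        gcongr
        linarith [Real.exp_one_lt_d9]

lemma tendsto_log_log_atTop : Tendsto (fun x : ℝ => Real.log (Real.log x)) atTop atTop :=
  Real.tendsto_log_atTop.comp Real.tendsto_log_atTop

lemma eventually_exists_upperTailBound_le {δ : ℝ} (hδ : 0 < δ) (hδ1 : δ ≤ 1) {k : ℕ}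
    (hk : 24 / δ ≤ k) :
    ∀ᶠ x : ℝ in atTop, ∃ (j : ℕ) (θ : ℝ), 0 ≤ θ ∧ j ≤ 2 * Real.log (Real.log x) ∧
      upperTailBound x (x ^ δ / 32) j k θ ≤ 4 / x ^ 2 := by
  have hlog2 : 1 / 2 < Real.log 2 := by linarith [Real.log_two_gt_d9]
  filter_upwards [eventually_ge_atTop 1,
    (Real.tendsto_log_atTop.const_mul_atTop (show 0 < 2 * (δ / 8) by positivity)
      ).eventually_ge_atTop (Real.log 2),
    eventually_exp_neg_mul_rpow_le (half_pos hδ) (show (0 : ℝ) < 1 / 131072 by norm_num) 5]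
    with x hx hlog hexp
  have hx0 : 0 < x := one_pos.trans_le hx
  obtain ⟨j, hj, hq⟩ := exists_squaringSeq_half_mem_Icc (A := 1 / 64) (by norm_num) hx0 hlog
  have hpow : (2 : ℝ) ^ j ≤ Real.log x := by
    have hδlog := mul_le_mul_of_nonneg_right hδ1 (Real.log_nonneg hx)
    have hpos : (0 : ℝ) < 2 ^ j := by positivity
    nlinarith
  have hjx : (j : ℝ) + 1 ≤ x := by
    have hjpow : ((j + 1 : ℕ) : ℝ) ≤ 2 ^ j := by exact_mod_cast Nat.lt_two_pow_self
    push_cast at hjpow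
    linarith [Real.log_le_self hx0.le]
  refine ⟨j, δ / 8 * Real.log x, mul_nonneg (by positivity) (Real.log_nonneg hx), ?_,
    upperTailBound_le hδ hx hjx hk hq hexp⟩
  have hjlog := Real.log_le_log (by positivity) hpow
  rw [Real.log_pow] at hjlog
  nlinarith [Nat.cast_nonneg (α := ℝ) j]

lemma natFloor_half_add_one_le {y : ℝ} (hy : 0 ≤ y) : ((⌊y / 2⌋₊ + 1 : ℕ) : ℝ) ≤ y / 2 + 1 := by
  push_cast
  linarith [Nat.floor_le (div_nonneg hy zero_le_two)]

lemma eventually_two_pow_mul_log_le {a c : ℝ} (ha : 0 < a) (hc : 0 < c) :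
    ∀ᶠ y : ℝ in atTop, (2 : ℝ) ^ (⌊y / 2⌋₊ + 1) * Real.log (c * (⌊y / 2⌋₊ + 1 : ℕ)) ≤
      a * Real.exp y := by
  have hexp := (Real.isLittleO_pow_exp_atTop (n := 1)).bound
    (show 0 < a / (c * Real.exp 2) by positivity)
  have htop : Tendsto (fun y : ℝ => y / 2 + 1) atTop atTop :=
    tendsto_atTop_add_const_right _ _ (tendsto_id.atTop_div_const two_pos)
  filter_upwards [htop.eventually hexp, eventually_ge_atTop 0] with y hy hy0
  set L := ⌊y / 2⌋₊ + 1
  have hL : (L : ℝ) ≤ y / 2 + 1 := natFloor_half_add_one_le hy0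
  have hz : c * Real.exp 2 * (y / 2 + 1) ≤ a * Real.exp (y / 2 + 1) := by
    rw [pow_one, Real.norm_of_nonneg (by positivity), Real.norm_of_nonneg (by positivity),
      div_mul_eq_mul_div, le_div_iff₀ (by positivity)] at hy
    linarith
  have hpow : (2 : ℝ) ^ L ≤ Real.exp L := by
    rw [← Real.exp_one_pow]
    gcongr
    linarith [Real.add_one_le_exp 1]
  calc (2 : ℝ) ^ L * Real.log (c * L) ≤ 2 ^ L * (c * L) := by
        gcongr
        exact Real.log_le_self (by positivity)
    _ ≤ Real.exp L * (c * L) := by gcongr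
    _ ≤ Real.exp (y / 2 + 1) * (c * (y / 2 + 1)) := by gcongr
    _ = Real.exp (y / 2 + 1) * (c * Real.exp 2 * (y / 2 + 1)) / Real.exp 2 := by
        field_simp
    _ ≤ Real.exp (y / 2 + 1) * (a * Real.exp (y / 2 + 1)) / Real.exp 2 := by gcongr
    _ = a * Real.exp y := by
        rw [mul_left_comm, ← Real.exp_add, mul_div_assoc, ← Real.exp_sub]
        ring_nf

lemma eventually_exists_lowerTailBound_le {δ : ℝ} (hδ : 0 < δ) :
    ∀ᶠ x : ℝ in atTop, ∃ L : ℕ, 0 < L ∧ L ≤ x ∧ 1 / 2 * Real.log (Real.log x) ≤ L ∧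
      lowerTailBound x (x ^ δ / 32) L ≤ 1 / x ^ 2 := by
  filter_upwards [eventually_gt_atTop 1, tendsto_log_log_atTop.eventually_ge_atTop 2,
    tendsto_log_log_atTop.eventually
      (eventually_two_pow_mul_log_le (half_pos hδ) (show (0 : ℝ) < 384 by norm_num)),
    eventually_exp_neg_mul_rpow_le (half_pos hδ) (show (0 : ℝ) < 1 / 32 by norm_num) 5]
    with x hx hy hlog hexp
  have hx0 : 0 < x := one_pos.trans hx
  have hlogx : 0 < Real.log x := Real.log_pos hx
  have hfloor := natFloor_half_add_one_le (zero_le_two.trans hy)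
  set L := ⌊Real.log (Real.log x) / 2⌋₊ + 1 with hL_def
  have hLx : (L : ℝ) ≤ x := by
    linarith [Real.log_le_self hlogx.le, Real.log_le_self hx0.le]
  have hLy : 1 / 2 * Real.log (Real.log x) ≤ L := by
    rw [hL_def, Nat.cast_add_one]
    linarith [Nat.lt_floor_add_one (Real.log (Real.log x) / 2)]
  have hL1 : (1 : ℝ) ≤ L := by rw [hL_def]; simp
  refine ⟨L, Nat.succ_pos _, hLx, hLy, ?_⟩
  rw [Real.exp_log hlogx] at hlog
  have hseq : x ^ (-(δ / 2)) ≤ squaringSeq (384 * L) (1 / (384 * L)) L :=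
    rpow_neg_le_squaringSeq_one_div (by linarith) (by positivity) hx0 hlog
  have hheavy : 1 / 32 * x ^ (δ / 2) ≤ squaringSeq (384 * L) (1 / (384 * L)) L * (x ^ δ / 32) := by
    calc 1 / 32 * x ^ (δ / 2) = x ^ (-(δ / 2)) * (x ^ δ / 32) := by
          rw [show δ / 2 = -(δ / 2) + δ by ring, Real.rpow_add hx0]
          ring_nf
      _ ≤ _ := by gcongr
  calc lowerTailBound x (x ^ δ / 32) L ≤ x * (x * x * (1 / x ^ 5)) := by
        unfold lowerTailBound
        gcongr
        exact (Real.exp_le_exp.mpr (neg_le_neg hheavy)).trans hexp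
    _ = 1 / x ^ 2 := by field_simp

end TailAsymptotics

section GridAsymptotics

lemma tendsto_sq_cast_atTop : Tendsto (fun m : ℕ => ((m ^ 2 : ℕ) : ℝ)) atTop atTop :=
  tendsto_natCast_atTop_atTop.comp (tendsto_pow_atTop two_ne_zero)

lemma Mf_le {α : ℝ} (hα : α ≤ 1) {n : ℕ} (hn : 0 < n) : Mf α n ≤ n :=
  Nat.ceil_le.mpr <| (Real.rpow_le_rpow_of_exponent_le (Nat.one_le_cast.mpr hn) hα).trans_eq
    (Real.rpow_one _)

lemma Mf_pos (α : ℝ) {n : ℕ} (hn : 0 < n) : 0 < Mf α n :=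
  Nat.ceil_pos.mpr (Real.rpow_pos_of_pos (Nat.cast_pos.mpr hn) α)

lemma rf_le_rpow_add_one (β : ℝ) (n : ℕ) : (rf β n : ℝ) ≤ (n : ℝ) ^ β + 1 :=
  (Nat.ceil_lt_add_one (by positivity)).le

lemma eventually_rf_lt {β : ℝ} (hβ : β < 1 / 2) : ∀ᶠ m : ℕ in atTop, rf β (m ^ 2) < m := by
  have hgap : 0 < 1 / 2 - β := sub_pos.mpr hβ
  filter_upwards [tendsto_sq_cast_atTop.eventually
      ((tendsto_rpow_atTop hgap).eventually_ge_atTop 2),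
    eventually_gt_atTop 2] with m hpow hm
  set x := ((m ^ 2 : ℕ) : ℝ) with hx
  have hx0 : 0 < x := by positivity
  have hsqrt : x ^ β * x ^ (1 / 2 - β) = m := by
    rw [← Real.rpow_add hx0, add_sub_cancel, ← Real.sqrt_eq_rpow, hx, Nat.cast_pow,
      Real.sqrt_sq (Nat.cast_nonneg m)]
  have hm2 : (2 : ℝ) < m := by exact_mod_cast hm
  have hrm : (rf β (m ^ 2) : ℝ) < m := by
    nlinarith [rf_le_rpow_add_one β (m ^ 2), Real.rpow_pos_of_pos hx0 β]
  exact_mod_cast hrm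

lemma rpow_div_four_le_slotMean {α β : ℝ} {m : ℕ} (hm : 0 < m) (hr : rf β (m ^ 2) < m) :
    ((m ^ 2 : ℕ) : ℝ) ^ (α + 2 * β - 1) / 4 ≤
      slotMean m (Mf α (m ^ 2)) (m ^ 2) (rf β (m ^ 2)) := by
  set x := ((m ^ 2 : ℕ) : ℝ)
  have hx0 : 0 < x := by positivity
  have hball : (x ^ β) ^ 2 / 4 ≤ ballCard m (rf β (m ^ 2)) := by
    refine le_trans ?_ (sq_div_four_le_ballCard hr)
    gcongr
    exact Nat.le_ceil _
  have hcache : x ^ α ≤ Mf α (m ^ 2) := Nat.le_ceil _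
  calc x ^ (α + 2 * β - 1) / 4 = (x ^ β) ^ 2 / 4 * x ^ α / x := by
        rw [Real.rpow_sub hx0, Real.rpow_add hx0, Real.rpow_one, two_mul, Real.rpow_add hx0]
        ring
    _ ≤ slotMean m (Mf α (m ^ 2)) (m ^ 2) (rf β (m ^ 2)) := by
        unfold slotMean
        gcongr

variable {α β : ℝ}

lemma eventually_unifProb_not_isBalanced_le (hα : α ≤ 1) (hβ : β < 1 / 2)
    (hαβ : 1 < α + 2 * β) :
    ∀ᶠ m : ℕ in atTop, unifProb {ω : Placement m (Mf α (m ^ 2)) (m ^ 2) |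
      ¬ IsBalanced (rf β (m ^ 2)) ω} ≤ 3 / ((m ^ 2 : ℕ) : ℝ) ^ 2 := by
  have hα0 : 0 < α := by linarith
  filter_upwards [eventually_gt_atTop 0, eventually_rf_lt hβ,
    tendsto_sq_cast_atTop.eventually
      (eventually_exp_neg_mul_rpow_le (sub_pos.mpr hαβ) (show (0 : ℝ) < 1 / 32 by norm_num) 4),
    tendsto_sq_cast_atTop.eventually
      (eventually_exp_neg_mul_rpow_le hα0 (show (0 : ℝ) < 1 / 8 by norm_num) 3)]
    with m hm hr hslot hcache
  have : NeZero m := ⟨hm.ne'⟩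
  have hn : 0 < m ^ 2 := pow_pos hm 2
  have hbad := unifProb_not_isBalanced_le (m := m) (Mf_pos α hn) (Mf_le hα hn) (rf β (m ^ 2))
  have hmean := rpow_div_four_le_slotMean (α := α) hm hr
  have hM : ((m ^ 2 : ℕ) : ℝ) ^ α ≤ Mf α (m ^ 2) := Nat.le_ceil _
  rw [← Nat.cast_pow] at hbad
  set x := ((m ^ 2 : ℕ) : ℝ)
  have hx0 : 0 < x := by positivity
  refine hbad.trans ?_
  calc _ ≤ 2 * x * x * (1 / x ^ 4) + x * (1 / x ^ 3) := by
        gcongr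
        · exact (Real.exp_le_exp.mpr (by linarith)).trans hslot
        · exact (Real.exp_le_exp.mpr (by linarith)).trans hcache
    _ = 3 / x ^ 2 := by
        field_simp
        norm_num

lemma one_sub_rpow_neg_one_le_mul {x ε ε' : ℝ} (hx : 8 ≤ x) (hε : ε ≤ 5 / x ^ 2)
    (hε' : ε' ≤ 3 / x ^ 2) : 1 - x ^ (-1 : ℝ) ≤ (1 - ε) * (1 - ε') := by
  have hx0 : 0 < x := by linarith
  have hinv : 8 * (1 / x ^ 2) ≤ x ^ (-1 : ℝ) := by
    rw [Real.rpow_neg_one, mul_one_div, div_le_iff₀ (by positivity), sq,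
      inv_mul_cancel_left₀ hx0.ne']
    exact hx
  have hsmall : 1 / x ^ 2 ≤ 1 / 5 := one_div_le_one_div_of_le (by norm_num) (by nlinarith)
  rw [← mul_one_div] at hε hε'
  calc 1 - x ^ (-1 : ℝ) ≤ (1 - 5 * (1 / x ^ 2)) * (1 - 3 * (1 / x ^ 2)) := by
        nlinarith [sq_nonneg (1 / x ^ 2)]
    _ ≤ (1 - ε) * (1 - ε') :=
        mul_le_mul (by linarith) (by linarith) (by linarith) (by linarith)

lemma eventually_le_probII_maxLoadII (hα : α ≤ 1) (hβ : β < 1 / 2) (hαβ : 1 < α + 2 * β) :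
    ∀ᶠ m : ℕ in atTop, 1 - ((m ^ 2 : ℕ) : ℝ) ^ (-1 : ℝ) ≤
      probII m (Mf α (m ^ 2)) (m ^ 2) (rf β (m ^ 2)) (m ^ 2)
        {x | 1 / 2 * Real.log (Real.log ((m ^ 2 : ℕ) : ℝ)) ≤ (maxLoadII x.2.2.1 x.2.2.2 : ℝ) ∧
          (maxLoadII x.2.2.1 x.2.2.2 : ℝ) ≤ 3 * Real.log (Real.log ((m ^ 2 : ℕ) : ℝ))} := by
  have hδ : 0 < α + 2 * β - 1 := sub_pos.mpr hαβ
  obtain ⟨k, hk⟩ := exists_nat_ge (24 / (α + 2 * β - 1))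
  filter_upwards [eventually_gt_atTop 0, eventually_rf_lt hβ,
    tendsto_sq_cast_atTop.eventually_ge_atTop 8,
    tendsto_sq_cast_atTop.eventually (eventually_exists_upperTailBound_le hδ (by linarith) hk),
    tendsto_sq_cast_atTop.eventually (eventually_exists_lowerTailBound_le hδ),
    (tendsto_log_log_atTop.comp tendsto_sq_cast_atTop).eventually_ge_atTop (5120 + (k : ℝ)),
    eventually_unifProb_not_isBalanced_le hα hβ hαβ]
    with m hm hr hx8 ⟨j, θ, hθ, hj, hupp⟩ ⟨L, hL, hLx, hLy, hlow⟩ hlog hbad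
  have : NeZero m := ⟨hm.ne'⟩
  have hmean := rpow_div_four_le_slotMean (α := α) hm hr
  have hprob := mul_one_sub_unifProb_le_probII_maxLoadII (r := rf β (m ^ 2))
    (Mf_pos α (pow_pos hm 2)) (s := ((m ^ 2 : ℕ) : ℝ) ^ (α + 2 * β - 1) / 32) (by positivity)
    (by linarith) j k hθ hL (Nat.cast_le.mp hLx)
    (P := fun l => 1 / 2 * Real.log (Real.log ((m ^ 2 : ℕ) : ℝ)) ≤ (l : ℝ) ∧
      (l : ℝ) ≤ 3 * Real.log (Real.log ((m ^ 2 : ℕ) : ℝ)))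
    fun l hLl hl => by
      have hLl' : (L : ℝ) ≤ l := Nat.cast_le.mpr hLl
      have hl' : (l : ℝ) ≤ 5120 + j + k := by exact_mod_cast hl.le
      exact ⟨hLy.trans hLl', by simp only [Function.comp_apply] at hlog; linarith⟩
  exact (one_sub_rpow_neg_one_le_mul hx8 ((add_le_add hupp hlow).trans_eq (by ring)) hbad).trans
    hprob

lemma ballCard_div_le {m r : ℕ} (hr : r < m) (hr96 : 96 ≤ r) :
    32 * ballCard m (r / 48) ≤ ballCard m r := by
  have hlow := sq_div_four_le_ballCard hr
  have hupp : (ballCard m (r / 48) : ℝ) ≤ (2 * (r / 48 : ℕ) + 2) ^ 2 := by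
    exact_mod_cast ballCard_le m (r / 48)
  have hd : 2 * ((r / 48 : ℕ) : ℝ) + 2 ≤ r / 12 := by
    have h : 12 * (2 * (r / 48) + 2) ≤ r := by omega
    have h' : 12 * (2 * ((r / 48 : ℕ) : ℝ) + 2) ≤ r := by exact_mod_cast h
    linarith
  have hsq : (2 * ((r / 48 : ℕ) : ℝ) + 2) ^ 2 ≤ (r / 12) ^ 2 := by gcongr
  have h : 32 * (ballCard m (r / 48) : ℝ) ≤ ballCard m r := by nlinarith
  exact_mod_cast h

lemma eventually_le_commCostII (hα : α ≤ 1) (hβ : β < 1 / 2) (hαβ : 1 < α + 2 * β) :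
    ∀ᶠ m : ℕ in atTop, 1 / 384 * ((m ^ 2 : ℕ) : ℝ) ^ β ≤
      commCostII m (Mf α (m ^ 2)) (m ^ 2) (rf β (m ^ 2)) (m ^ 2) := by
  have hβ0 : 0 < β := by linarith
  filter_upwards [eventually_gt_atTop 0, eventually_rf_lt hβ,
    tendsto_sq_cast_atTop.eventually_ge_atTop 8,
    tendsto_sq_cast_atTop.eventually ((tendsto_rpow_atTop hβ0).eventually_ge_atTop 96),
    eventually_unifProb_not_isBalanced_le hα hβ hαβ] with m hm hr hx8 hpow hbad
  have : NeZero m := ⟨hm.ne'⟩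
  set r := rf β (m ^ 2)
  have hxr : ((m ^ 2 : ℕ) : ℝ) ^ β ≤ r := Nat.le_ceil _
  have hr96 : 96 ≤ r := by exact_mod_cast hpow.trans hxr
  have hcost := mul_one_sub_unifProb_le_commCostII (Mf_pos α (pow_pos hm 2))
    (ballCard_div_le hr hr96)
  have hbad' : unifProb {ω : Placement m (Mf α (m ^ 2)) (m ^ 2) | ¬ IsBalanced r ω} ≤ 1 / 2 := by
    refine hbad.trans ?_
    rw [div_le_iff₀ (by positivity)]
    nlinarith
  have hd : (r : ℝ) / 96 ≤ (r / 48 : ℕ) := by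
    have h : r ≤ 96 * (r / 48) := by omega
    have h' : (r : ℝ) ≤ 96 * (r / 48 : ℕ) := by exact_mod_cast h
    linarith
  nlinarith [Nat.cast_nonneg (α := ℝ) (r / 48)]

lemma commCostII_le_two_mul_rpow (hβ : 0 ≤ β) {m : ℕ} (hm : 0 < m) (M K n : ℕ) :
    commCostII m M K (rf β (m ^ 2)) n ≤ 2 * ((m ^ 2 : ℕ) : ℝ) ^ β := by
  have hone : 1 ≤ ((m ^ 2 : ℕ) : ℝ) ^ β :=
    Real.one_le_rpow (Nat.one_le_cast.mpr (pow_pos hm 2)) hβ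
  linarith [commCostII_le_radius (m := m) (M := M) (K := K) (rf β (m ^ 2)) n,
    rf_le_rpow_add_one β (m ^ 2)]

end GridAsymptotics

theorem statement6_general {α β : ℝ} (hα : α ≤ 1) (hβ : β < 1 / 2) (hαβ : 1 < α + 2 * β) :
    ∃ c₁ c₂ c₃ c₄ c : ℝ, 0 < c₁ ∧ 0 < c₂ ∧ 0 < c₃ ∧ 0 < c₄ ∧ 0 < c ∧
      ∃ N : ℕ, ∀ m : ℕ, N ≤ m →
        (1 - (((m ^ 2 : ℕ) : ℝ)) ^ (-c) ≤
          probII m (Mf α (m ^ 2)) (m ^ 2) (rf β (m ^ 2)) (m ^ 2)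
            {x | c₁ * Real.log (Real.log ((m ^ 2 : ℕ) : ℝ)) ≤
                  (maxLoadII x.2.2.1 x.2.2.2 : ℝ) ∧
                (maxLoadII x.2.2.1 x.2.2.2 : ℝ) ≤
                  c₂ * Real.log (Real.log ((m ^ 2 : ℕ) : ℝ))}) ∧
        c₃ * (((m ^ 2 : ℕ) : ℝ)) ^ β ≤
            commCostII m (Mf α (m ^ 2)) (m ^ 2) (rf β (m ^ 2)) (m ^ 2) ∧
        commCostII m (Mf α (m ^ 2)) (m ^ 2) (rf β (m ^ 2)) (m ^ 2) ≤
            c₄ * (((m ^ 2 : ℕ) : ℝ)) ^ β := by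
  refine ⟨1 / 2, 3, 1 / 384, 2, 1, by norm_num, by norm_num, by norm_num, by norm_num,
    by norm_num, eventually_atTop.mp ?_⟩
  filter_upwards [eventually_le_probII_maxLoadII hα hβ hαβ,
    eventually_le_commCostII hα hβ hαβ, eventually_gt_atTop 0] with m hload hcost hm
  exact ⟨hload, hcost, commCostII_le_two_mul_rpow (by linarith) hm _ _ _⟩

lemma one_lt_of_forall_one_add_log_log_div_log_le {γ : ℝ} {N₀ : ℕ}
    (h : ∀ n : ℕ, N₀ ≤ n → 1 + 2 * Real.log (Real.log n) / Real.log n ≤ γ) : 1 < γ := by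
  have hle := h (max N₀ 3) (le_max_left _ _)
  have hn : (3 : ℝ) ≤ (max N₀ 3 : ℕ) := by exact_mod_cast le_max_right N₀ 3
  have hlog : 1 < Real.log (max N₀ 3 : ℕ) := by
    rw [Real.lt_log_iff_exp_lt (by linarith)]
    linarith [Real.exp_one_lt_d9]
  have hloglog : 0 < Real.log (Real.log (max N₀ 3 : ℕ)) := Real.log_pos hlog
  have hdiv : 0 < 2 * Real.log (Real.log (max N₀ 3 : ℕ)) / Real.log (max N₀ 3 : ℕ) := by
    positivity
  linarith

/-- Let `0 < α, β < 1/2` be constants, `K = n`, `M = ⌈n^α⌉`,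
`r = ⌈n^β⌉`, and assume `α + 2β ≥ 1 + 2·log log n/log n` for all sufficiently large
`n`.  Under the Uniform popularity distribution, Strategy II with radius `r` achieves
maximum load `Θ(log log n)` with high probability, and its communication cost is
`Θ(r) = Θ(n^β)`. -/
theorem statement6 (α β : ℝ) (hα0 : 0 < α) (hα1 : α < 1 / 2) (hβ0 : 0 < β)
    (hβ1 : β < 1 / 2)
    (hcond : ∃ N₀ : ℕ, ∀ n : ℕ, N₀ ≤ n →
      1 + 2 * Real.log (Real.log (n : ℝ)) / Real.log (n : ℝ) ≤ α + 2 * β) :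
    ∃ c₁ c₂ c₃ c₄ c : ℝ, 0 < c₁ ∧ 0 < c₂ ∧ 0 < c₃ ∧ 0 < c₄ ∧ 0 < c ∧
      ∃ N : ℕ, ∀ m : ℕ, N ≤ m →
        (1 - (((m ^ 2 : ℕ) : ℝ)) ^ (-c) ≤
          probII m (Mf α (m ^ 2)) (m ^ 2) (rf β (m ^ 2)) (m ^ 2)
            {x | c₁ * Real.log (Real.log ((m ^ 2 : ℕ) : ℝ)) ≤
                  (maxLoadII x.2.2.1 x.2.2.2 : ℝ) ∧
                (maxLoadII x.2.2.1 x.2.2.2 : ℝ) ≤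
                  c₂ * Real.log (Real.log ((m ^ 2 : ℕ) : ℝ))}) ∧
        c₃ * (((m ^ 2 : ℕ) : ℝ)) ^ β ≤
            commCostII m (Mf α (m ^ 2)) (m ^ 2) (rf β (m ^ 2)) (m ^ 2) ∧
        commCostII m (Mf α (m ^ 2)) (m ^ 2) (rf β (m ^ 2)) (m ^ 2) ≤
            c₄ * (((m ^ 2 : ℕ) : ℝ)) ^ β := by
  obtain ⟨N₀, hN₀⟩ := hcond
  exact statement6_general (by linarith) hβ1 (one_lt_of_forall_one_add_log_log_div_log_le hN₀)
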